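/- Let k ≥ 1 be an integer and let G be a simple graph of order n ≥ max{6k+11, k²+2k+3}. If q(G) ≥ q(L_{n,k}), then G contains a cycle C_ℓ for every integer ℓ with 3 ≤ ℓ ≤ n−k+1, unless G is isomorphic to L_{n,k}. -/

import Mathlib

open SimpleGraph

/-- `G` contains a cycle of length `l`. -/
def HasCycleLen {V : Type} (G : SimpleGraph V) (l : ℕ) : Prop :=
  ∃ (v : V) (c : G.Walk v v), c.IsCycle ∧ c.length = l

/-- The circumference of `G`: the length of a longest cycle. -/
noncomputable def circumference {V : Type} (G : SimpleGraph V) : ℕ :=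
  sSup {l | HasCycleLen G l}

/-- `G` is weakly pancyclic with girth 3: it contains a cycle of every length `l`
with `3 ≤ l ≤ c(G)`. -/
def WeaklyPancyclic3 {V : Type} (G : SimpleGraph V) : Prop :=
  HasCycleLen G 3 ∧ ∀ l : ℕ, 3 ≤ l → l ≤ circumference G → HasCycleLen G l

/-- The number of edges of `G`. -/
noncomputable def edgeCount {V : Type} (G : SimpleGraph V) : ℕ :=
  Nat.card G.edgeSet

/-- The degree of `v` in `G`. -/
noncomputable def degCount {V : Type} (G : SimpleGraph V) (v : V) : ℕ :=
  Nat.card (G.neighborSet v)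

/-- The spectral radius of `G`: the largest eigenvalue of the adjacency matrix. -/
noncomputable def specRad {V : Type} [Finite V] (G : SimpleGraph V) : ℝ :=
  letI := Fintype.ofFinite V
  letI := Classical.decEq V
  letI := Classical.decRel G.Adj
  sSup (spectrum ℝ (G.adjMatrix ℝ))

/-- The signless Laplacian spectral radius of `G`: the largest eigenvalue of `D(G) + A(G)`. -/
noncomputable def qSpecRad {V : Type} [Finite V] (G : SimpleGraph V) : ℝ :=
  letI := Fintype.ofFinite V
  letI := Classical.decEq V
  letI := Classical.decRel G.Adj
  sSup (spectrum ℝ (Matrix.diagonal (fun v => (degCount G v : ℝ)) + G.adjMatrix ℝ))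

/-- `L_{n,k} = K_1 ∨ (K_{n-k-1} + K_k)`: vertex `0` is the common vertex of a clique on
the `n - k` vertices `{0, …, n-k-1}` and a clique on the `k+1` vertices `{0} ∪ {n-k, …, n-1}`. -/
def Lgraph (n k : ℕ) : SimpleGraph (Fin n) :=
  SimpleGraph.fromRel (fun u v =>
    u.val = 0 ∨ v.val = 0 ∨ (u.val < n - k ∧ v.val < n - k) ∨
      (n - k ≤ u.val ∧ n - k ≤ v.val))

/-- `Γ_{n,t} = K_2 ∨ (K_{n-2-t} + t·K_1)`: vertices `0,1` are joined to everything,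
vertices `2, …, n-t-1` form a clique, and vertices `n-t, …, n-1` are independent. -/
def GammaGraph (n t : ℕ) : SimpleGraph (Fin n) :=
  SimpleGraph.fromRel (fun u v =>
    u.val < 2 ∨ v.val < 2 ∨ (u.val < n - t ∧ v.val < n - t))

/-- `F` is a member of the family `F_{n,k}`: there is a clique `K` on `n - k` vertices
such that each connected component of `F - K` is a clique all of whose vertices are
adjacent to one single common vertex of `K` and to no other vertex of `K`. -/
def MemF (n k : ℕ) (F : SimpleGraph (Fin n)) : Prop :=
  ∃ K : Finset (Fin n), K.card = n - k ∧ F.IsClique (↑K : Set (Fin n)) ∧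
    (∀ u v : ({x : Fin n | x ∉ K} : Set (Fin n)),
      (F.induce {x : Fin n | x ∉ K}).Reachable u v → (u = v ∨ F.Adj u.1 v.1)) ∧
    (∀ u : ({x : Fin n | x ∉ K} : Set (Fin n)), ∃! w : Fin n, w ∈ K ∧ F.Adj u.1 w) ∧
    (∀ u v : ({x : Fin n | x ∉ K} : Set (Fin n)),
      (F.induce {x : Fin n | x ∉ K}).Reachable u v →
        ∀ w ∈ K, F.Adj u.1 w → F.Adj v.1 w)

/-- `G` is a subgraph of `H` (up to relabelling): there is an injective graph
homomorphism from `G` to `H`. -/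
def IsSubgraphOf {n : ℕ} (G H : SimpleGraph (Fin n)) : Prop :=
  ∃ f : G →g H, Function.Injective f

section QLCspec
open Classical Finset

noncomputable def QLC.qf {n : ℕ} (G : SimpleGraph (Fin n)) (y : Fin n → ℝ) : ℝ :=
  ∑ u, ∑ v, if G.Adj u v then (y u + y v) ^ 2 else 0

noncomputable def QLC.mat {n : ℕ} (G : SimpleGraph (Fin n)) : Matrix (Fin n) (Fin n) ℝ :=
  Matrix.diagonal (fun v => (degCount G v : ℝ)) + G.adjMatrix ℝ

theorem QLC.qSpecRad_eq {n : ℕ} (G : SimpleGraph (Fin n)) :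
    qSpecRad G = sSup (spectrum ℝ (QLC.mat G)) := by
  unfold qSpecRad QLC.mat
  congr!

theorem QLC.degCount_eq {n : ℕ} (G : SimpleGraph (Fin n)) (u : Fin n) :
    (degCount G u : ℝ) = ∑ v, if G.Adj u v then (1 : ℝ) else 0 := by
  unfold degCount
  rw [Nat.card_eq_fintype_card, ← Set.toFinset_card, Finset.sum_boole]
  congr 2
  ext v
  simp

theorem QLC.mulVec_eq {n : ℕ} (G : SimpleGraph (Fin n)) (y : Fin n → ℝ) (u : Fin n) :
    (QLC.mat G).mulVec y u = ∑ v, if G.Adj u v then (y u + y v) else 0 := by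
  unfold QLC.mat
  rw [Matrix.add_mulVec, Pi.add_apply, Matrix.mulVec_diagonal, QLC.degCount_eq, Finset.sum_mul]
  simp only [Matrix.mulVec, dotProduct, SimpleGraph.adjMatrix_apply]
  rw [← Finset.sum_add_distrib]
  refine Finset.sum_congr rfl fun v _ => ?_
  split_ifs <;> ring

theorem QLC.isHermitian {n : ℕ} (G : SimpleGraph (Fin n)) : (QLC.mat G).IsHermitian := by
  unfold QLC.mat
  refine Matrix.IsHermitian.add ?_ ?_
  · exact Matrix.isHermitian_diagonal _
  · have := G.isSymm_adjMatrix (α := ℝ)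
    rw [Matrix.IsHermitian, Matrix.conjTranspose_eq_transpose_of_trivial]
    exact this

/-- the two double sums -/
theorem QLC.qf_eq {n : ℕ} (G : SimpleGraph (Fin n)) (y : Fin n → ℝ) :
    QLC.qf G y = 2 * (y ⬝ᵥ (QLC.mat G).mulVec y) := by
  have h1 : (y ⬝ᵥ (QLC.mat G).mulVec y) =
      ∑ u, ∑ v, if G.Adj u v then y u * (y u + y v) else 0 := by
    simp only [dotProduct, QLC.mulVec_eq, Finset.mul_sum]
    refine Finset.sum_congr rfl fun u _ => Finset.sum_congr rfl fun v _ => ?_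
    split_ifs <;> ring
  have h2 : (y ⬝ᵥ (QLC.mat G).mulVec y) =
      ∑ u, ∑ v, if G.Adj u v then y v * (y u + y v) else 0 := by
    rw [h1, Finset.sum_comm]
    refine Finset.sum_congr rfl fun u _ => Finset.sum_congr rfl fun v _ => ?_
    simp only [G.adj_comm v u]
    split_ifs <;> ring
  rw [two_mul]
  nth_rewrite 1 [h1]
  rw [h2, ← Finset.sum_add_distrib]
  unfold QLC.qf
  refine Finset.sum_congr rfl fun u _ => ?_
  rw [← Finset.sum_add_distrib]
  refine Finset.sum_congr rfl fun v _ => ?_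
  split_ifs <;> ring

theorem QLC.posSemidef {n : ℕ} (G : SimpleGraph (Fin n)) :
    (algebraMap ℝ (Matrix (Fin n) (Fin n) ℝ) (qSpecRad G) - QLC.mat G).PosSemidef := by
  rw [Matrix.posSemidef_iff_isHermitian_and_spectrum_nonneg]
  refine ⟨Matrix.IsHermitian.sub ?_ (QLC.isHermitian G), ?_⟩
  · rw [Matrix.algebraMap_eq_diagonal]; exact Matrix.isHermitian_diagonal _
  · rw [← spectrum.singleton_sub_eq]
    rintro z hz
    obtain ⟨a, ha, b, hb, rfl⟩ := Set.mem_sub.1 hz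
    have : b ≤ qSpecRad G := by
      rw [QLC.qSpecRad_eq]
      exact le_csSup (Matrix.finite_real_spectrum).bddAbove hb
    simp at ha
    subst ha
    simpa using this

theorem QLC.sub_mulVec {n : ℕ} (G : SimpleGraph (Fin n)) (y : Fin n → ℝ) :
    (algebraMap ℝ (Matrix (Fin n) (Fin n) ℝ) (qSpecRad G) - QLC.mat G).mulVec y =
      qSpecRad G • y - (QLC.mat G).mulVec y := by
  rw [Matrix.sub_mulVec, Algebra.algebraMap_eq_smul_one, Matrix.smul_mulVec, Matrix.one_mulVec]

theorem QLC.dot_self {n : ℕ} (y : Fin n → ℝ) : y ⬝ᵥ y = ∑ u, y u ^ 2 := by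
  simp [dotProduct, sq]

theorem QLC.qf_le {n : ℕ} (G : SimpleGraph (Fin n)) (y : Fin n → ℝ) :
    QLC.qf G y ≤ 2 * qSpecRad G * ∑ u, y u ^ 2 := by
  have h := (QLC.posSemidef G).dotProduct_mulVec_nonneg y
  rw [QLC.sub_mulVec, dotProduct_sub, dotProduct_smul, star_trivial, QLC.dot_self] at h
  rw [QLC.qf_eq]
  simp only [smul_eq_mul] at h
  linarith

theorem QLC.eq_of_qf_eq {n : ℕ} (G : SimpleGraph (Fin n)) (y : Fin n → ℝ)
    (hy : 2 * qSpecRad G * ∑ u, y u ^ 2 ≤ QLC.qf G y) (u : Fin n) :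
    (∑ v, if G.Adj u v then (y u + y v) else 0) = qSpecRad G * y u := by
  have h := ((QLC.posSemidef G).dotProduct_mulVec_zero_iff y).1 (by
    have h1 := QLC.qf_le G y
    rw [QLC.sub_mulVec, dotProduct_sub, dotProduct_smul, star_trivial, QLC.dot_self]
    rw [QLC.qf_eq] at h1 hy
    simp only [smul_eq_mul]
    linarith)
  rw [QLC.sub_mulVec] at h
  have h2 := congrFun h u
  rw [← QLC.mulVec_eq]
  simp at h2
  linarith

theorem QLC.exists_eigen {n : ℕ} (hn : 0 < n) (G : SimpleGraph (Fin n)) :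
    ∃ x : Fin n → ℝ, x ≠ 0 ∧
      ∀ u, (∑ v, if G.Adj u v then (x u + x v) else 0) = qSpecRad G * x u := by
  have hne : (spectrum ℝ (QLC.mat G)).Nonempty := by
    rw [(QLC.isHermitian G).spectrum_real_eq_range_eigenvalues]
    have : Nonempty (Fin n) := ⟨⟨0, hn⟩⟩
    exact Set.range_nonempty _
  have hmem := hne.csSup_mem Matrix.finite_real_spectrum
  rw [← QLC.qSpecRad_eq, ← Matrix.spectrum_toLin', ← Module.End.hasEigenvalue_iff_mem_spectrum]
    at hmem
  obtain ⟨x, hx⟩ := hmem.exists_hasEigenvector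
  refine ⟨x, hx.2, fun u => ?_⟩
  have := congrFun hx.apply_eq_smul u
  rw [Matrix.toLin'_apply, QLC.mulVec_eq] at this
  simpa using this

theorem QLC.exists_nonneg {n : ℕ} (hn : 0 < n) (G : SimpleGraph (Fin n)) :
    ∃ x : Fin n → ℝ, x ≠ 0 ∧ (∀ u, 0 ≤ x u) ∧ 2 * qSpecRad G * ∑ u, x u ^ 2 ≤ QLC.qf G x := by
  obtain ⟨x, hx, he⟩ := QLC.exists_eigen hn G
  refine ⟨fun u => |x u|, ?_, fun u => abs_nonneg _, ?_⟩
  · intro h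
    apply hx
    funext u
    have := congrFun h u
    simpa using this
  · have h1 : QLC.qf G x = 2 * qSpecRad G * ∑ u, x u ^ 2 := by
      rw [QLC.qf_eq]
      simp only [dotProduct, QLC.mulVec_eq, he, Finset.mul_sum]
      refine Finset.sum_congr rfl fun u _ => ?_
      ring
    have h2 : QLC.qf G x ≤ QLC.qf G (fun u => |x u|) := by
      refine Finset.sum_le_sum fun u _ => Finset.sum_le_sum fun v _ => ?_
      split_ifs
      · rw [← sq_abs (x u + x v)]
        gcongr
        exact abs_add_le _ _
      · exact le_rfl
    simp only [sq_abs]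
    rw [← h1]; exact h2

end QLCspec

section QLCcyc
open Classical Finset

/-- `p 0, …, p (l-1)` is a cyclic enumeration of a cycle of `G`. -/
def QLC.IsC {V : Type} (G : SimpleGraph V) (l : ℕ) (p : ℕ → V) : Prop :=
  (∀ i j, i < l → j < l → p i = p j → i = j) ∧ (∀ i, i + 1 < l → G.Adj (p i) (p (i + 1))) ∧
    G.Adj (p (l - 1)) (p 0)

theorem QLC.IsC.hasCycleLen {V : Type} {G : SimpleGraph V} {l : ℕ} {p : ℕ → V}
    (h : QLC.IsC G l p) (hl : 3 ≤ l) : HasCycleLen G l := by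
  unfold HasCycleLen
  rw [← SimpleGraph.cycleGraph_isContained_iff (by omega)]
  obtain ⟨hinj, hadj, hcl⟩ := h
  refine ⟨⟨⟨fun i => p i.val, ?_⟩, ?_⟩⟩
  · intro a b hab
    have key : ∀ a b : Fin l, (a - b).val = 1 → G.Adj (p b.val) (p a.val) := by
      intro a b hab
      have ha := a.2
      have hb := b.2
      rcases lt_or_ge a b with h | h
      · rw [Fin.coe_sub_iff_lt.2 h] at hab
        have h' : a.val < b.val := h
        have h1 : a.val = 0 := by omega
        have h2 : b.val = l - 1 := by omega
        rw [h1, h2]; exact hcl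
      · rw [Fin.sub_val_of_le h] at hab
        have h1 : a.val = b.val + 1 := by omega
        rw [h1]; exact hadj _ (by omega)
    rcases SimpleGraph.cycleGraph_adj'.1 hab with h | h
    · exact (key _ _ h).symm
    · exact key _ _ h
  · intro a b hab
    exact Fin.ext (hinj _ _ a.2 b.2 hab)

/-- rotation -/
theorem QLC.IsC.rotate {V : Type} {G : SimpleGraph V} {l : ℕ} {p : ℕ → V}
    (h : QLC.IsC G l p) (t : ℕ) (ht : t < l) :
    QLC.IsC G l (fun i => p (if i + t < l then i + t else i + t - l)) := by
  obtain ⟨hinj, hadj, hcl⟩ := h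
  refine ⟨?_, ?_, ?_⟩
  · intro i j hi hj hij
    have := hinj _ _ (by split_ifs <;> omega) (by split_ifs <;> omega) hij
    split_ifs at this <;> omega
  · intro i hi
    by_cases h1 : i + 1 + t < l
    · have h2 : i + t < l := by omega
      simp only [h1, h2, if_true]
      have := hadj (i + t) (by omega)
      rwa [show i + t + 1 = i + 1 + t by omega] at this
    · by_cases h2 : i + t < l
      · simp only [h1, h2, if_true, if_false]
        rw [show i + t = l - 1 by omega, show i + 1 + t - l = 0 by omega]
        exact hcl
      · simp only [h1, h2, if_false]
        have := hadj (i + t - l) (by omega)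
        rwa [show i + t - l + 1 = i + 1 + t - l by omega] at this
  · by_cases h1 : t = 0
    · subst h1
      have h2 : l - 1 < l := by omega
      have h3 : 0 < l := by omega
      simp only [Nat.add_zero, h2, h3, if_true]
      exact hcl
    · have h2 : ¬ (l - 1 + t < l) := by omega
      have h3 : 0 + t < l := by omega
      simp only [h2, h3, if_true, if_false]
      have := hadj (t - 1) (by omega)
      rw [show t - 1 + 1 = 0 + t by omega] at this
      rwa [show l - 1 + t - l = t - 1 by omega]

/-- reversal -/
theorem QLC.IsC.reverse {V : Type} {G : SimpleGraph V} {l : ℕ} {p : ℕ → V}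
    (h : QLC.IsC G l p) (hl : 0 < l) : QLC.IsC G l (fun i => p (l - 1 - i)) := by
  obtain ⟨hinj, hadj, hcl⟩ := h
  refine ⟨?_, ?_, ?_⟩
  · intro i j hi hj hij
    have := hinj _ _ (by omega) (by omega) hij
    omega
  · intro i hi
    have := hadj (l - 1 - (i + 1)) (by omega)
    rw [show l - 1 - (i + 1) + 1 = l - 1 - i by omega] at this
    exact this.symm
  · have : l - 1 - (l - 1) = 0 := by omega
    simp only [this, Nat.sub_zero]
    exact hcl.symm

/-- chords `p 0 ~ p j` and `p 1 ~ p (j - l + 3)` -/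
theorem QLC.IsC.chordA {V : Type} {G : SimpleGraph V} {m : ℕ} {p : ℕ → V}
    (h : QLC.IsC G m p) (l j : ℕ) (hl : 3 ≤ l) (hj : l - 1 ≤ j) (hjm : j < m)
    (h0 : G.Adj (p 0) (p j)) (h1 : G.Adj (p 1) (p (j + 3 - l))) :
    QLC.IsC G l (fun i => p (if i < 2 then i else j + 3 - l + i - 2)) := by
  obtain ⟨hinj, hadj, hcl⟩ := h
  refine ⟨?_, ?_, ?_⟩
  · intro a b ha hb hab
    have := hinj _ _ (by split_ifs <;> omega) (by split_ifs <;> omega) hab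
    split_ifs at this <;> omega
  · intro i hi
    rcases Nat.lt_trichotomy i 1 with h2 | h2 | h2
    · have : i = 0 := by omega
      subst this
      simp only [show (0 : ℕ) < 2 by omega, show (0 + 1 : ℕ) < 2 by omega, if_true]
      exact hadj 0 (by omega)
    · subst h2
      simp only [show (1 : ℕ) < 2 by omega, show ¬ (1 + 1 : ℕ) < 2 by omega, if_true, if_false]
      rwa [show j + 3 - l + (1 + 1) - 2 = j + 3 - l by omega]
    · simp only [show ¬ i < 2 by omega, show ¬ (i + 1 : ℕ) < 2 by omega, if_false]
      have := hadj (j + 3 - l + i - 2) (by omega)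
      rwa [show j + 3 - l + i - 2 + 1 = j + 3 - l + (i + 1) - 2 by omega] at this
  · simp only [show ¬ l - 1 < 2 by omega, show (0 : ℕ) < 2 by omega, if_true, if_false]
    rw [show j + 3 - l + (l - 1) - 2 = j by omega]
    exact h0.symm

/-- chords `p 0 ~ p j` and `p 1 ~ p (j + m + 1 - l)` -/
theorem QLC.IsC.chordB {V : Type} {G : SimpleGraph V} {m : ℕ} {p : ℕ → V}
    (h : QLC.IsC G m p) (l j : ℕ) (hl : l ≤ m) (hj2 : 2 ≤ j) (hj : j + 2 ≤ l)
    (h0 : G.Adj (p 0) (p j)) (h1 : G.Adj (p 1) (p (j + m + 1 - l))) :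
    QLC.IsC G l (fun i => p (if i < j then i + 1 else if i = j then 0 else m + j - i)) := by
  obtain ⟨hinj, hadj, hcl⟩ := h
  refine ⟨?_, ?_, ?_⟩
  · intro a b ha hb hab
    have := hinj _ _ (by split_ifs <;> omega) (by split_ifs <;> omega) hab
    split_ifs at this <;> omega
  · intro i hi
    by_cases h2 : i + 1 < j
    · simp only [show i < j by omega, h2, if_true]
      exact hadj (i + 1) (by omega)
    · by_cases h3 : i + 1 = j
      · simp only [show i < j by omega, h3, if_true, lt_irrefl, if_false]
        exact h0.symm
      · by_cases h4 : i = j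
        · simp only [h4, lt_irrefl, if_false, if_true, show ¬ j + 1 < j by omega,
            show ¬ j + 1 = j by omega]
          rw [show m + j - (j + 1) = m - 1 by omega]
          exact hcl.symm
        · simp only [show ¬ i < j by omega, h2, h3, h4, if_false]
          have := hadj (m + j - (i + 1)) (by omega)
          rw [show m + j - (i + 1) + 1 = m + j - i by omega] at this
          exact this.symm
  · simp only [show ¬ l - 1 < j by omega, show ¬ l - 1 = j by omega, show 0 < j by omega, if_true,
      if_false]
    rw [show m + j - (l - 1) = j + m + 1 - l by omega]
    exact h1.symm

/-- co-degree -/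
noncomputable def QLC.cod {n : ℕ} (G : SimpleGraph (Fin n)) (v : Fin n) : ℕ :=
  #{u | u ≠ v ∧ ¬ G.Adj v u}

noncomputable def QLC.tot {n : ℕ} (G : SimpleGraph (Fin n)) : ℕ := ∑ v, QLC.cod G v

/-- pancyclicity from one light edge of a cycle -/
theorem QLC.pan_of_light {n : ℕ} {G : SimpleGraph (Fin n)} {m : ℕ} {p : ℕ → Fin n}
    (h : QLC.IsC G m p) (hc : QLC.cod G (p 0) + QLC.cod G (p 1) + 3 ≤ m)
    (l : ℕ) (hl : 3 ≤ l) (hlm : l ≤ m) : ∃ q, QLC.IsC G l q := by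
  obtain ⟨hinj, hadj, hcl⟩ := id h
  set σ : ℕ → ℕ := fun j => if l - 1 ≤ j then j + 3 - l else j + m + 1 - l with hσ
  by_contra hno
  have hcov : Finset.Ico 2 m ⊆ (Finset.Ico 2 m).filter (fun j => ¬ G.Adj (p 0) (p j)) ∪
      (Finset.Ico 2 m).filter (fun j => ¬ G.Adj (p 1) (p (σ j))) := by
    intro j hj
    rw [Finset.mem_union, Finset.mem_filter, Finset.mem_filter]
    by_contra hcon
    push Not at hcon
    have ha := hcon.1 hj
    have hb := hcon.2 hj
    rw [Finset.mem_Ico] at hj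
    apply hno
    by_cases hjl : l - 1 ≤ j
    · simp only [hσ, hjl, if_true] at hb
      exact ⟨_, h.chordA l j hl hjl hj.2 ha hb⟩
    · simp only [hσ, hjl, if_false] at hb
      exact ⟨_, h.chordB l j hlm hj.1 (by omega) ha hb⟩
  have hσr : ∀ j, 2 ≤ j → j < m → 2 ≤ σ j ∧ σ j < m := by
    intro j h2 hm
    simp only [hσ]
    split_ifs <;> omega
  have hσi : ∀ i j, 2 ≤ i → i < m → 2 ≤ j → j < m → σ i = σ j → i = j := by
    intro i j _ _ _ _
    simp only [hσ]
    split_ifs <;> omega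
  have h1 : #((Finset.Ico 2 m).filter (fun j => ¬ G.Adj (p 0) (p j))) ≤ QLC.cod G (p 0) := by
    refine Finset.card_le_card_of_injOn p ?_ ?_
    · intro j hj
      simp only [Finset.coe_filter, Finset.mem_Ico, Set.mem_ofPred_eq] at hj
      simp only [Finset.coe_filter, Finset.mem_univ, true_and, Set.mem_ofPred_eq]
      refine ⟨fun he => ?_, hj.2⟩
      have := hinj _ _ (by omega) (by omega) he
      omega
    · intro i hi j hj hij
      simp only [Finset.coe_filter, Finset.mem_Ico, Set.mem_ofPred_eq] at hi hj
      exact hinj _ _ (by omega) (by omega) hij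
  have h2 : #((Finset.Ico 2 m).filter (fun j => ¬ G.Adj (p 1) (p (σ j)))) ≤
      QLC.cod G (p 1) := by
    refine Finset.card_le_card_of_injOn (fun j => p (σ j)) ?_ ?_
    · intro j hj
      simp only [Finset.coe_filter, Finset.mem_Ico, Set.mem_ofPred_eq] at hj
      simp only [Finset.coe_filter, Finset.mem_univ, true_and, Set.mem_ofPred_eq]
      have := hσr j hj.1.1 hj.1.2
      refine ⟨fun he => ?_, hj.2⟩
      have := hinj _ _ (by omega) (by omega) he
      omega
    · intro i hi j hj hij
      simp only [Finset.coe_filter, Finset.mem_Ico, Set.mem_ofPred_eq] at hi hj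
      have h3 := hσr i hi.1.1 hi.1.2
      have h4 := hσr j hj.1.1 hj.1.2
      exact hσi i j hi.1.1 hi.1.2 hj.1.1 hj.1.2 (hinj _ _ (by omega) (by omega) hij)
  have h3 := Finset.card_le_card hcov
  have h4 := Finset.card_union_le ((Finset.Ico 2 m).filter (fun j => ¬ G.Adj (p 0) (p j)))
    ((Finset.Ico 2 m).filter (fun j => ¬ G.Adj (p 1) (p (σ j))))
  rw [Nat.card_Ico] at h3
  omega

theorem QLC.pan {n : ℕ} {G : SimpleGraph (Fin n)} {m : ℕ} {p : ℕ → Fin n}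
    (h : QLC.IsC G m p) (hm : 3 ≤ m) (hc : 2 * QLC.tot G < m * (m - 2))
    (l : ℕ) (hl : 3 ≤ l) (hlm : l ≤ m) : HasCycleLen G l := by
  have hex : ∃ i < m, QLC.cod G (p i) +
      QLC.cod G (p (if i + 1 < m then i + 1 else i + 1 - m)) < m - 2 := by
    by_contra hcon
    push Not at hcon
    have hs : ∑ i ∈ Finset.range m, (m - 2) ≤ ∑ i ∈ Finset.range m, (QLC.cod G (p i) +
        QLC.cod G (p (if i + 1 < m then i + 1 else i + 1 - m))) :=
      Finset.sum_le_sum fun i hi => hcon i (Finset.mem_range.1 hi)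
    rw [Finset.sum_add_distrib, Finset.sum_const, Finset.card_range, smul_eq_mul] at hs
    have key : ∀ q, QLC.IsC G m q → ∑ i ∈ Finset.range m, QLC.cod G (q i) ≤ QLC.tot G := by
      intro q hq
      rw [← Finset.sum_image (f := fun v => QLC.cod G v) (g := q)]
      · exact Finset.sum_le_univ_sum_of_nonneg (fun _ => Nat.zero_le _)
      · intro i hi j hj hij
        simp only [Finset.coe_range, Set.mem_Iio] at hi hj
        exact hq.1 i j hi hj hij
    have k1 := key p h
    have k2 := key _ (h.rotate 1 (by omega))
    omega
  obtain ⟨i, hi, hci⟩ := hex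
  have hr := h.rotate i hi
  obtain ⟨q, hq⟩ := QLC.pan_of_light hr (by
    have e1 : (if 0 + i < m then 0 + i else 0 + i - m) = i := by split_ifs <;> omega
    have e2 : (if 1 + i < m then 1 + i else 1 + i - m) =
      (if i + 1 < m then i + 1 else i + 1 - m) := by rw [Nat.add_comm]
    rw [e1, e2]; omega) l hl hlm
  exact hq.hasCycleLen hl

/-- The closure lemma of Ore / Bondy–Chvátal type. -/
theorem QLC.closure {n : ℕ} {G : SimpleGraph (Fin n)} {l : ℕ} {p : ℕ → Fin n} (hl : 3 ≤ l)
    (hinj : ∀ i j, i < l → j < l → p i = p j → i = j)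
    (hadj : ∀ i, i + 1 < l → G.Adj (p i) (p (i + 1)))
    (hno : ∀ m q, l ≤ m → ¬ QLC.IsC G m q) :
    G.degree (p 0) + G.degree (p (l - 1)) + 1 ≤ n := by
  set u := p 0 with hu
  set v := p (l - 1) with hv
  -- no crossing
  have hcross : ∀ i, i + 1 < l → G.Adj u (p (i + 1)) → ¬ G.Adj (p i) v := by
    intro i hi h1 h2
    refine hno l (fun t => p (if t ≤ i then t else l + i - t)) le_rfl ⟨?_, ?_, ?_⟩
    · intro a b ha hb hab
      have := hinj _ _ (by split_ifs <;> omega) (by split_ifs <;> omega) hab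
      split_ifs at this <;> omega
    · intro t ht
      by_cases h3 : t + 1 ≤ i
      · simp only [h3, show t ≤ i by omega, if_true]
        exact hadj t ht
      · by_cases h4 : t = i
        · simp only [h4, le_refl, if_true, show ¬ i + 1 ≤ i by omega, if_false]
          rw [show l + i - (i + 1) = l - 1 by omega]
          exact h2
        · simp only [h3, show ¬ t ≤ i by omega, if_false]
          have := hadj (l + i - (t + 1)) (by omega)
          rw [show l + i - (t + 1) + 1 = l + i - t by omega] at this
          exact this.symm
    · simp only [Nat.zero_le, if_true]
      by_cases h3 : l - 1 ≤ i
      · omega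
      · simp only [h3, if_false]
        rw [show l + i - (l - 1) = i + 1 by omega]
        exact h1.symm
  have hout : ∀ w, (∀ i, i < l → p i ≠ w) → G.Adj u w → ¬ G.Adj v w := by
    intro w hw h1 h2
    refine hno (l + 1) (fun t => if t < l then p t else w) (by omega) ⟨?_, ?_, ?_⟩
    · intro a b ha hb hab
      by_cases h3 : a < l <;> by_cases h4 : b < l <;> simp only [h3, h4, if_true, if_false] at hab
      · exact hinj a b h3 h4 hab
      · exact absurd hab (hw a h3)
      · exact absurd hab.symm (hw b h4)
      · omega
    · intro t ht
      by_cases h3 : t + 1 < l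
      · simp only [h3, show t < l by omega, if_true]
        exact hadj t h3
      · simp only [h3, show t < l by omega, if_true, if_false]
        rw [show t = l - 1 by omega]
        exact h2
    · simp only [show ¬ l + 1 - 1 < l by omega, show 0 < l by omega, if_true, if_false]
      exact h1.symm
  -- the shifting map
  set φ : Fin n → Fin n := fun w => if h : ∃ i, i + 1 < l ∧ p (i + 1) = w then p h.choose else w
    with hφ
  have hφ1 : ∀ i, i + 1 < l → φ (p (i + 1)) = p i := by
    intro i hi
    have hex : ∃ j, j + 1 < l ∧ p (j + 1) = p (i + 1) := ⟨i, hi, rfl⟩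
    simp only [hφ, hex, dif_pos]
    have := hex.choose_spec
    have h2 := hinj _ _ this.1 hi this.2
    congr 1
    omega
  have hφ2 : ∀ w, (∀ i, i < l → p i ≠ w) → φ w = w := by
    intro w hw
    have hex : ¬ ∃ j, j + 1 < l ∧ p (j + 1) = w := by
      rintro ⟨j, hj, hjw⟩
      exact hw _ hj hjw
    simp only [hφ, hex, dif_neg, not_false_eq_true]
  have hcase : ∀ w, G.Adj u w → (∃ i, i + 1 < l ∧ w = p (i + 1)) ∨ (∀ i, i < l → p i ≠ w) := by
    intro w hw
    by_cases hc : ∃ i, i < l ∧ p i = w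
    · obtain ⟨i, hi, rfl⟩ := hc
      left
      have : i ≠ 0 := by
        rintro rfl
        exact G.loopless.irrefl _ hw
      exact ⟨i - 1, by omega, by congr 1; omega⟩
    · right
      push Not at hc
      exact hc
  have hinjφ : Set.InjOn φ (G.neighborFinset u : Set (Fin n)) := by
    intro a ha b hb hab
    simp only [SimpleGraph.coe_neighborFinset, SimpleGraph.mem_neighborSet] at ha hb
    rcases hcase a ha with ⟨i, hi, rfl⟩ | h1 <;> rcases hcase b hb with ⟨j, hj, rfl⟩ | h2
    · rw [hφ1 i hi, hφ1 j hj] at hab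
      have := hinj _ _ (by omega) (by omega) hab
      rw [this]
    · rw [hφ1 i hi, hφ2 b h2] at hab
      exact absurd hab (h2 i (by omega))
    · rw [hφ1 j hj, hφ2 a h1] at hab
      exact absurd hab.symm (h1 j (by omega))
    · rwa [hφ2 a h1, hφ2 b h2] at hab
  have hdis : Disjoint ((G.neighborFinset u).image φ) (G.neighborFinset v) := by
    rw [Finset.disjoint_left]
    intro z hz hzv
    rw [Finset.mem_image] at hz
    obtain ⟨w, hw, rfl⟩ := hz
    rw [SimpleGraph.mem_neighborFinset] at hw hzv
    rcases hcase w hw with ⟨i, hi, rfl⟩ | h1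
    · rw [hφ1 i hi] at hzv
      exact hcross i hi hw hzv.symm
    · rw [hφ2 w h1] at hzv
      exact hout w h1 hw hzv
  have hsub : (G.neighborFinset u).image φ ∪ (G.neighborFinset v) ⊆ Finset.univ.erase v := by
    intro z hz
    rw [Finset.mem_erase]
    refine ⟨?_, Finset.mem_univ _⟩
    rintro rfl
    rcases Finset.mem_union.1 hz with h | h
    · obtain ⟨w, hw, hwz⟩ := Finset.mem_image.1 h
      rw [SimpleGraph.mem_neighborFinset] at hw
      rcases hcase w hw with ⟨i, hi, rfl⟩ | h1
      · rw [hφ1 i hi] at hwz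
        have := hinj _ _ (by omega) (by omega) hwz
        omega
      · rw [hφ2 w h1] at hwz
        exact h1 (l - 1) (by omega) hwz.symm
    · rw [SimpleGraph.mem_neighborFinset] at h
      exact G.loopless.irrefl _ h
  have h3 := Finset.card_le_card hsub
  rw [Finset.card_union_of_disjoint hdis, Finset.card_image_of_injOn hinjφ,
    Finset.card_erase_of_mem (Finset.mem_univ _), Finset.card_univ, Fintype.card_fin,
    SimpleGraph.card_neighborFinset_eq_degree, SimpleGraph.card_neighborFinset_eq_degree] at h3
  have : 0 < n := Fin.pos v
  omega

/-- In an edge-maximal graph without long cycles, non-adjacent vertices have small degree sum. -/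
theorem QLC.maximal_deg {n : ℕ} {G : SimpleGraph (Fin n)} {L : ℕ} (hL : 3 ≤ L)
    (hmax : Maximal (fun H : SimpleGraph (Fin n) => ∀ m q, L ≤ m → ¬ QLC.IsC H m q) G)
    (u v : Fin n) (huv : u ≠ v) (hna : ¬ G.Adj u v) : G.degree u + G.degree v + 1 ≤ n := by
  have hno := hmax.prop
  have hnot : ¬ (∀ m q, L ≤ m → ¬ QLC.IsC (G ⊔ SimpleGraph.edge u v) m q) := by
    intro hcon
    have h1 := hmax.le_of_ge hcon le_sup_left
    apply hna
    apply h1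
    rw [SimpleGraph.sup_adj, SimpleGraph.edge_adj]
    exact Or.inr ⟨Or.inl ⟨rfl, rfl⟩, huv⟩
  push Not at hnot
  obtain ⟨l, p, hl, hp⟩ := hnot
  have hadj' : ∀ a b, (G ⊔ SimpleGraph.edge u v).Adj a b →
      G.Adj a b ∨ (a = u ∧ b = v) ∨ (a = v ∧ b = u) := by
    intro a b hab
    rw [SimpleGraph.sup_adj, SimpleGraph.edge_adj] at hab
    rcases hab with h | h
    · exact Or.inl h
    · rcases h.1 with h | h
      · exact Or.inr (Or.inl ⟨h.1, h.2⟩)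
      · exact Or.inr (Or.inr ⟨h.1, h.2⟩)
  -- finishing with a rotated cycle
  have fin : ∀ q, QLC.IsC (G ⊔ SimpleGraph.edge u v) l q →
      ((q (l - 1) = u ∧ q 0 = v) ∨ (q (l - 1) = v ∧ q 0 = u)) →
      G.degree u + G.degree v + 1 ≤ n := by
    intro q hq hend
    have hgood : ∀ i, i + 1 < l → G.Adj (q i) (q (i + 1)) := by
      intro i hi
      rcases hadj' _ _ (hq.2.1 i hi) with h | h | h
      · exact h
      · exfalso
        rcases hend with he | he
        · have := hq.1 i (l - 1) (by omega) (by omega) (by rw [h.1, he.1])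
          omega
        · have h1 := hq.1 i 0 (by omega) (by omega) (by rw [h.1, he.2])
          have h2 := hq.1 (i + 1) (l - 1) (by omega) (by omega) (by rw [h.2, he.1])
          omega
      · exfalso
        rcases hend with he | he
        · have h1 := hq.1 i 0 (by omega) (by omega) (by rw [h.1, he.2])
          have h2 := hq.1 (i + 1) (l - 1) (by omega) (by omega) (by rw [h.2, he.1])
          omega
        · have := hq.1 i (l - 1) (by omega) (by omega) (by rw [h.1, he.1])
          omega
    have := QLC.closure (by omega) hq.1 hgood (fun m r hm => hno m r (by omega))
    rcases hend with he | he
    · rw [he.1, he.2] at this; omega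
    · rw [he.1, he.2] at this; omega
  by_cases hall : (∀ i, i + 1 < l → G.Adj (p i) (p (i + 1))) ∧ G.Adj (p (l - 1)) (p 0)
  · exact absurd ⟨hp.1, hall.1, hall.2⟩ (hno l p hl)
  · rw [not_and_or] at hall
    rcases hall with h | h
    · push Not at h
      obtain ⟨i, hi, hia⟩ := h
      have hr := hp.rotate (i + 1) (by omega)
      refine fin _ hr ?_
      have e1 : (if l - 1 + (i + 1) < l then l - 1 + (i + 1) else l - 1 + (i + 1) - l) = i := by
        split_ifs <;> omega
      have e2 : (if 0 + (i + 1) < l then 0 + (i + 1) else 0 + (i + 1) - l) = i + 1 := by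
        split_ifs <;> omega
      simp only [e1, e2]
      rcases hadj' _ _ (hp.2.1 i hi) with h | h
      · exact absurd h hia
      · exact h
    · refine fin p hp ?_
      rcases hadj' _ _ hp.2.2 with h' | h'
      · exact absurd h' h
      · exact h'

end QLCcyc

section QLCcomb
open Classical Finset

theorem QLC.isC_of_list {V : Type} {G : SimpleGraph V} (a : V) (M : List V)
    (hnd : (a :: M).Nodup) (hch : List.IsChain G.Adj (a :: M))
    (hcl : ∀ x ∈ (a :: M).getLast?, G.Adj x a) :
    ∃ p, QLC.IsC G (a :: M).length p := by
  refine ⟨fun i => (a :: M).getD i a, ?_, ?_, ?_⟩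
  · intro i j hi hj hij
    simp only [List.getD_eq_getElem _ _ hi, List.getD_eq_getElem _ _ hj] at hij
    exact (hnd.getElem_inj_iff).1 hij
  · intro i hi
    beta_reduce
    rw [List.getD_eq_getElem _ _ hi, List.getD_eq_getElem _ _ (by omega)]
    exact (List.isChain_iff_getElem.1 hch) i (by omega)
  · beta_reduce
    rw [List.getD_eq_getElem _ _ (by simp), List.getD_eq_getElem _ _ (by simp)]
    refine hcl _ ?_
    rw [List.getLast?_eq_getElem?]
    simp

theorem QLC.absorb {n : ℕ} {G : SimpleGraph (Fin n)} {A : Finset (Fin n)}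
    (hA : G.IsClique (A : Set (Fin n))) (a b : Fin n) (ha : a ∈ A) (hb : b ∈ A)
    (M : List (Fin n)) (hnd : (a :: (M ++ [b])).Nodup)
    (hch : List.IsChain G.Adj (a :: (M ++ [b])))
    (T : Finset (Fin n)) (hTM : ∀ t ∈ T, t ∈ M) (hTA : ∀ t ∈ T, t ∉ A) :
    ∃ m p, #A + #T ≤ m ∧ QLC.IsC G m p := by
  set Q := a :: (M ++ [b]) with hQ
  set R := (A \ Q.toFinset).toList with hR
  have hRmem : ∀ x, x ∈ R ↔ x ∈ A ∧ x ∉ Q := by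
    intro x
    rw [hR, Finset.mem_toList, Finset.mem_sdiff, List.mem_toFinset]
  have hRnd : R.Nodup := Finset.nodup_toList _
  have hnd' : (Q ++ R).Nodup := by
    rw [List.nodup_append']
    refine ⟨hnd, hRnd, ?_⟩
    intro x hx hxR
    exact ((hRmem x).1 hxR).2 hx
  have hlast : ∀ x ∈ Q.getLast?, x = b := by
    intro x hx
    have : Q.getLast? = some b := by
      rw [hQ, ← List.cons_append, List.getLast?_append]; simp
    rw [this] at hx
    simpa using hx.symm
  have hab : a ≠ b := by
    rintro rfl
    rw [hQ] at hnd
    simp at hnd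
  have hch' : List.IsChain G.Adj (Q ++ R) := by
    rw [List.isChain_append]
    refine ⟨hch, ?_, ?_⟩
    · apply List.Pairwise.isChain
      rw [List.pairwise_iff_forall_sublist]
      intro x y hxy
      have hx := hxy.subset (List.mem_cons_self)
      have hy := hxy.subset (List.mem_cons_of_mem _ List.mem_cons_self)
      refine hA ((hRmem x).1 hx).1 ((hRmem y).1 hy).1 ?_
      rintro rfl
      have := hRnd.sublist hxy
      simp at this
    · intro x hx y hy
      rw [hlast x hx]
      have hy' := (hRmem y).1 (List.mem_of_mem_head? hy)
      refine hA hb hy'.1 ?_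
      rintro rfl
      exact hy'.2 (by rw [hQ]; simp)
  have hcl : ∀ x ∈ (Q ++ R).getLast?, G.Adj x a := by
    intro x hx
    rw [List.getLast?_append] at hx
    by_cases hRe : R = []
    · rw [hRe] at hx
      have := hlast x (by simpa using hx)
      rw [this]
      exact hA hb ha hab.symm
    · have hx' : x ∈ R := by
        rw [List.getLast?_eq_some_getLast hRe] at hx
        simp at hx
        rw [← hx]
        exact List.getLast_mem hRe
      have := (hRmem x).1 hx'
      refine hA this.1 ha ?_
      rintro rfl
      exact this.2 (by rw [hQ]; simp)
  obtain ⟨p, hp⟩ := QLC.isC_of_list a (M ++ [b] ++ R) hnd' hch' hcl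
  refine ⟨_, p, ?_, hp⟩
  have h1 : (A ∪ T) ⊆ (Q ++ R).toFinset := by
    intro x hx
    rw [List.mem_toFinset, List.mem_append]
    rcases Finset.mem_union.1 hx with h | h
    · by_cases hxQ : x ∈ Q
      · exact Or.inl hxQ
      · exact Or.inr ((hRmem x).2 ⟨h, hxQ⟩)
    · left
      rw [hQ]
      simp [hTM x h]
  have h2 := Finset.card_le_card h1
  rw [List.toFinset_card_of_nodup hnd', Finset.card_union_of_disjoint] at h2
  · exact h2
  · rw [Finset.disjoint_left]
    intro x hxA hxT
    exact hTA x hxT hxA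

theorem QLC.cod_add_degree {n : ℕ} (G : SimpleGraph (Fin n)) (v : Fin n) :
    QLC.cod G v + G.degree v + 1 = n := by
  have h1 : QLC.cod G v = #(({v} ∪ G.neighborFinset v)ᶜ) := by
    unfold QLC.cod
    congr 1
    ext w
    simp
  have h2 : #({v} ∪ G.neighborFinset v) = 1 + G.degree v := by
    rw [Finset.card_union_of_disjoint]
    · simp
    · simp
  have h3 := Finset.card_add_card_compl ({v} ∪ G.neighborFinset v)
  rw [Fintype.card_fin] at h3
  omega

/-- number of neighbours of `u` in `A` -/
noncomputable def QLC.dg {n : ℕ} (G : SimpleGraph (Fin n)) (A : Finset (Fin n)) (u : Fin n) : ℕ :=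
  #(A.filter (fun a => G.Adj u a))

theorem QLC.dg_add {n : ℕ} (G : SimpleGraph (Fin n)) (A : Finset (Fin n)) (u : Fin n) :
    QLC.dg G A u + QLC.dg G Aᶜ u = G.degree u := by
  unfold QLC.dg
  rw [← SimpleGraph.card_neighborFinset_eq_degree, ← Finset.card_union_of_disjoint]
  · congr 1
    ext w
    simp only [Finset.mem_union, Finset.mem_filter, Finset.mem_compl,
      SimpleGraph.mem_neighborFinset]
    tauto
  · rw [Finset.disjoint_left]
    intro x hx hy
    simp only [Finset.mem_filter, Finset.mem_compl] at hx hy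
    exact hy.1 hx.1

theorem QLC.count {n : ℕ} (G : SimpleGraph (Fin n)) (A : Finset (Fin n)) :
    #Aᶜ * (n - 1) + #Aᶜ * #A ≤ QLC.tot G +
      ∑ u ∈ Aᶜ, (2 * QLC.dg G A u + QLC.dg G Aᶜ u) := by
  have h0 : QLC.tot G = ∑ a ∈ A, QLC.cod G a + ∑ u ∈ Aᶜ, QLC.cod G u :=
    (Finset.sum_add_sum_compl A _).symm
  have h1 : #Aᶜ * (n - 1) = ∑ u ∈ Aᶜ, (QLC.cod G u + (QLC.dg G A u + QLC.dg G Aᶜ u)) := by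
    rw [← smul_eq_mul, ← Finset.sum_const]
    refine Finset.sum_congr rfl fun u _ => ?_
    have := QLC.cod_add_degree G u
    have := QLC.dg_add G A u
    omega
  have h2 : ∑ u ∈ Aᶜ, #(A.filter (fun a => ¬ G.Adj u a)) ≤ ∑ a ∈ A, QLC.cod G a := by
    have := Finset.sum_card_bipartiteAbove_eq_sum_card_bipartiteBelow (s := Aᶜ) (t := A)
      (fun u a => ¬ G.Adj u a)
    unfold Finset.bipartiteAbove Finset.bipartiteBelow at this
    rw [this]
    refine Finset.sum_le_sum fun a ha => ?_
    unfold QLC.cod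
    refine Finset.card_le_card ?_
    intro u hu
    simp only [Finset.mem_filter, Finset.mem_compl, Finset.mem_univ, true_and] at hu ⊢
    refine ⟨?_, fun h => hu.2 h.symm⟩
    rintro rfl
    exact hu.1 ha
  have h3 : #Aᶜ * #A = ∑ u ∈ Aᶜ, (QLC.dg G A u + #(A.filter (fun a => ¬ G.Adj u a))) := by
    rw [← smul_eq_mul, ← Finset.sum_const]
    refine Finset.sum_congr rfl fun u _ => ?_
    unfold QLC.dg
    rw [Finset.card_filter_add_card_filter_not]
  rw [h0, h1, h3]
  simp only [Finset.sum_add_distrib, two_mul]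
  omega

theorem QLC.max_clique {n : ℕ} (G : SimpleGraph (Fin n)) (A0 : Finset (Fin n))
    (h0 : G.IsClique (A0 : Set (Fin n))) :
    ∃ A : Finset (Fin n), A0 ⊆ A ∧ G.IsClique (A : Set (Fin n)) ∧
      ∀ v ∉ A, ∃ u ∈ A, ¬ G.Adj v u := by
  obtain ⟨A, hle, hmax⟩ := Finite.exists_le_maximal
    (p := fun B : Finset (Fin n) => G.IsClique (B : Set (Fin n))) h0
  refine ⟨A, hle, hmax.prop, fun v hv => ?_⟩
  by_contra hcon
  push Not at hcon
  have : G.IsClique ((insert v A : Finset (Fin n)) : Set (Fin n)) := by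
    rw [Finset.coe_insert, SimpleGraph.isClique_insert]
    exact ⟨hmax.prop, fun b hb _ => hcon b hb⟩
  have h1 := hmax.le_of_ge this (Finset.subset_insert v A)
  exact hv (h1 (Finset.mem_insert_self _ _))

/-- arithmetic contradiction for `s ≥ k + 2` -/
theorem QLC.arith (k n s : ℤ) (hk : 1 ≤ k) (hn1 : 6 * k + 11 ≤ n) (hn2 : k ^ 2 + 2 * k + 3 ≤ n)
    (h1 : k + 2 ≤ s) (h2 : s ≤ 4 * k) : 2 * k * (n - 1) ≤ s * (2 * n - 3 * s - 1) := by
  have hn3 : 8 * k + 1 ≤ n := by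
    rcases le_or_gt k 5 with h | h
    · omega
    · nlinarith
  have e1 : 2 * k * (n - 1) ≤ (k + 2) * (2 * n - 3 * (k + 2) - 1) := by
    rcases le_or_gt k 3 with h | h
    · interval_cases k <;> omega
    · nlinarith
  have e2 : 2 * k * (n - 1) ≤ (4 * k) * (2 * n - 3 * (4 * k) - 1) := by nlinarith
  -- concavity
  have hcv : 0 ≤ 3 * (s - (k + 2)) * (4 * k - s) := by
    have := mul_nonneg (sub_nonneg.2 h1) (sub_nonneg.2 h2)
    linarith
  rcases eq_or_lt_of_le h1 with h | h
  · rw [← h]; exact e1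
  · have hpos : 0 < 4 * k - (k + 2) := by omega
    set F := fun t : ℤ => t * (2 * n - 3 * t - 1) - 2 * k * (n - 1) with hF
    have hid : (4 * k - (k + 2)) * F s = (4 * k - s) * F (k + 2) + (s - (k + 2)) * F (4 * k)
        + (4 * k - (k + 2)) * (3 * (s - (k + 2)) * (4 * k - s)) := by
      simp only [hF]; ring
    have hF1 : 0 ≤ F (k + 2) := by simp only [hF]; linarith
    have hF2 : 0 ≤ F (4 * k) := by simp only [hF]; linarith
    have hge : 0 ≤ (4 * k - (k + 2)) * F s := by
      rw [hid]
      have a1 := mul_nonneg (sub_nonneg.2 h2) hF1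
      have a2 := mul_nonneg (sub_nonneg.2 h1) hF2
      have a3 := mul_nonneg hpos.le hcv
      linarith
    have := nonneg_of_mul_nonneg_right hge hpos
    simp only [hF] at this
    linarith

end QLCcomb

section QLCstruct
open Classical Finset

theorem QLC.dg_avoid {n : ℕ} (G : SimpleGraph (Fin n)) (S B : Finset (Fin n)) (u : Fin n)
    (hB : B ⊆ S) (h : ∀ w ∈ B, ¬ G.Adj u w) : QLC.dg G S u + #B ≤ #S := by
  unfold QLC.dg
  rw [← Finset.card_union_of_disjoint]
  · refine Finset.card_le_card ?_
    intro x hx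
    rcases Finset.mem_union.1 hx with h1 | h1
    · exact (Finset.mem_filter.1 h1).1
    · exact hB h1
  · rw [Finset.disjoint_left]
    intro x hx hxB
    exact h x hxB (Finset.mem_filter.1 hx).2

theorem QLC.two_nbrs {n : ℕ} {G : SimpleGraph (Fin n)} {A : Finset (Fin n)} {u : Fin n}
    (h : 2 ≤ QLC.dg G A u) : ∃ a b, a ≠ b ∧ a ∈ A ∧ b ∈ A ∧ G.Adj u a ∧ G.Adj u b := by
  obtain ⟨a, ha, b, hb, hab⟩ := Finset.one_lt_card.1 (show 1 < #(A.filter (G.Adj u ·)) from h)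
  rw [Finset.mem_filter] at ha hb
  exact ⟨a, b, hab, ha.1, hb.1, ha.2, hb.2⟩

set_option maxHeartbeats 1000000 in
/-- the case of exactly `k+1` vertices outside of the clique -/
theorem QLC.sum_bound {n k : ℕ} (hk : 1 ≤ k) {G : SimpleGraph (Fin n)} {A : Finset (Fin n)}
    (hA : G.IsClique (A : Set (Fin n))) (hs : #Aᶜ = k + 1)
    (hdeg : ∀ u ∉ A, G.degree u ≤ k + 1)
    (hno : ∀ m q, #A + 2 ≤ m → ¬ QLC.IsC G m q) :
    ∑ u ∈ Aᶜ, (2 * QLC.dg G A u + QLC.dg G Aᶜ u) ≤ (k + 1) * (k + 2) + 2 := by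
  set x := QLC.dg G A with hx
  set y := QLC.dg G Aᶜ with hy
  -- adjacency in S
  have F2 : ∀ u ∉ A, ∀ v ∉ A, 2 ≤ x u → 1 ≤ x v → ¬ G.Adj u v := by
    intro u hu v hv hxu hxv hadj
    obtain ⟨a, b, hab, ha, hb, hua, hub⟩ := QLC.two_nbrs hxu
    obtain ⟨c, hc⟩ := Finset.card_pos.1 (show 0 < #(A.filter (G.Adj v ·)) from hxv)
    rw [Finset.mem_filter] at hc
    have huv : u ≠ v := hadj.ne
    have key : ∀ a ∈ A, G.Adj u a → a ≠ c → False := by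
      intro a ha hua hac
      have hau : a ≠ u := hua.ne'
      have hcv : c ≠ v := hc.2.ne'
      have hav : a ≠ v := fun h => hv (h ▸ ha)
      have hcu : c ≠ u := fun h => hu (h ▸ hc.1)
      obtain ⟨m, p, hm, hp⟩ := QLC.absorb hA a c ha hc.1 [u, v]
        (by simp; grind)
        (by simp [hua.symm, hadj, hc.2]) {u, v}
        (by simp) (by simp [hu, hv])
      rw [Finset.card_pair huv] at hm
      exact hno m p hm hp
    by_cases hac : a = c
    · exact key b hb hub (fun h => hab (hac.trans h.symm))
    · exact key a ha hua hac
  have F1 : ∀ u ∉ A, ∀ v ∉ A, u ≠ v → 2 ≤ x u → 2 ≤ x v → x u ≤ 2 := by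
    intro u hu v hv huv _ hxv
    by_contra hxu
    push Not at hxu
    obtain ⟨c, d, hcd, hc, hd, hvc, hvd⟩ := QLC.two_nbrs hxv
    have h1 : ∃ a ∈ A.filter (G.Adj u ·), a ∉ ({c, d} : Finset (Fin n)) := by
      apply Finset.exists_mem_notMem_of_card_lt_card
      rw [Finset.card_pair hcd]
      exact hxu
    obtain ⟨a, ha, hacd⟩ := h1
    rw [Finset.mem_filter] at ha
    obtain ⟨b, hb, hba⟩ := Finset.exists_mem_ne (show 1 < #(A.filter (G.Adj u ·)) by
      have : #(A.filter (G.Adj u ·)) = x u := rfl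
      omega) a
    rw [Finset.mem_filter] at hb
    simp only [Finset.mem_insert, Finset.mem_singleton, not_or] at hacd
    have nA : ∀ z ∈ A, z ≠ u ∧ z ≠ v := fun z hz => ⟨fun h => hu (h ▸ hz), fun h => hv (h ▸ hz)⟩
    have key : ∀ c d, c ∈ A → d ∈ A → c ≠ d → G.Adj v c → G.Adj v d → a ≠ d → b = c → False := by
      intro c d hc hd hcd hvc hvd had hbc
      subst hbc
      have := nA a ha.1
      have := nA b hb.1
      have := nA d hd
      obtain ⟨m, p, hm, hp⟩ := QLC.absorb hA a d ha.1 hd [u, b, v]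
        (by simp; grind)
        (by simp [ha.2.symm, hb.2, hvc.symm, hvd]) {u, v}
        (by simp) (by simp [hu, hv])
      rw [Finset.card_pair huv] at hm
      exact hno m p hm hp
    by_cases hbc : b = c
    · exact key c d hc hd hcd hvc hvd hacd.2 hbc
    · by_cases hbd : b = d
      · exact key d c hd hc hcd.symm hvd hvc hacd.1 hbd
      · have := nA a ha.1
        have := nA b hb.1
        have := nA c hc
        have := nA d hd
        have hadj : G.Adj b c := hA hb.1 hc hbc
        obtain ⟨m, p, hm, hp⟩ := QLC.absorb hA a d ha.1 hd [u, b, c, v]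
          (by simp; grind)
          (by simp [ha.2.symm, hb.2, hvc.symm, hvd, hadj]) {u, v}
          (by simp) (by simp [hu, hv])
        rw [Finset.card_pair huv] at hm
        exact hno m p hm hp
  have hyk : ∀ u ∈ Aᶜ, y u ≤ k := by
    intro u hu
    have := QLC.dg_avoid G Aᶜ {u} u (by simpa using hu) (by simp)
    rw [Finset.card_singleton] at this
    have : QLC.dg G Aᶜ u = y u := rfl
    omega
  set T := Aᶜ.filter (fun u => 2 ≤ x u) with hT
  have hTS : T ⊆ Aᶜ := Finset.filter_subset _ _
  have hTmem : ∀ u, u ∈ T ↔ u ∉ A ∧ 2 ≤ x u := by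
    intro u; rw [hT, Finset.mem_filter, Finset.mem_compl]
  rcases Nat.lt_trichotomy (#T) 1 with h | h | h
  · have hT0 : T = ∅ := Finset.card_eq_zero.1 (by omega)
    have : ∀ u ∈ Aᶜ, 2 * x u + y u ≤ k + 2 := by
      intro u hu
      have h1 := hyk u hu
      have h2 : u ∉ T := by rw [hT0]; simp
      rw [hTmem] at h2
      rw [Finset.mem_compl] at hu
      have : ¬ 2 ≤ x u := fun h => h2 ⟨hu, h⟩
      omega
    have h3 := Finset.sum_le_card_nsmul _ _ _ this
    rw [hs, smul_eq_mul] at h3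
    omega
  · obtain ⟨u0, hu0⟩ := Finset.card_eq_one.1 h
    have hu0T : u0 ∈ T := by rw [hu0]; simp
    have hu0' := (hTmem u0).1 hu0T
    rw [← Finset.add_sum_erase _ _ (hTS hu0T)]
    have h1 : 2 * x u0 + y u0 ≤ 2 * (k + 1) := by
      have := QLC.dg_add G A u0
      have := hdeg u0 hu0'.1
      have : QLC.dg G Aᶜ u0 = y u0 := rfl
      have : QLC.dg G A u0 = x u0 := rfl
      omega
    have h2 : ∀ u ∈ Aᶜ.erase u0, 2 * x u + y u ≤ k + 1 := by
      intro u hu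
      rw [Finset.mem_erase] at hu
      have h2 : u ∉ T := by rw [hu0]; simpa using hu.1
      have hy1 := hyk u hu.2
      rw [hTmem] at h2
      have huA := Finset.mem_compl.1 hu.2
      have h3 : ¬ 2 ≤ x u := fun h => h2 ⟨huA, h⟩
      by_cases h4 : x u = 0
      · omega
      · have h5 := F2 u0 hu0'.1 u huA hu0'.2 (by omega)
        have h6 := QLC.dg_avoid G Aᶜ {u, u0} u (by
          intro z hz
          rw [Finset.mem_insert, Finset.mem_singleton] at hz
          rcases hz with rfl | rfl
          · exact hu.2
          · exact hTS hu0T) (by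
          intro z hz
          rw [Finset.mem_insert, Finset.mem_singleton] at hz
          rcases hz with rfl | rfl
          · simp
          · exact fun h => h5 h.symm)
        rw [Finset.card_pair hu.1, hs] at h6
        have : QLC.dg G Aᶜ u = y u := rfl
        omega
    have h3 := Finset.sum_le_card_nsmul _ _ _ h2
    rw [Finset.card_erase_of_mem (hTS hu0T), hs, smul_eq_mul] at h3
    have : (k + 1 - 1) * (k + 1) = k * (k + 1) := by rfl
    nlinarith
  · rw [← Finset.sum_sdiff hTS]
    have htS := Finset.card_le_card hTS
    have h1 : ∀ u ∈ T, 2 * x u + y u ≤ k + 5 - #T := by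
      intro u hu
      have hu' := (hTmem u).1 hu
      obtain ⟨v, hv, hvu⟩ := Finset.exists_mem_ne h u
      have hv' := (hTmem v).1 hv
      have h2 := F1 u hu'.1 v hv'.1 hvu.symm hu'.2 hv'.2
      have h3 := QLC.dg_avoid G Aᶜ T u hTS (by
        intro w hw
        have hw' := (hTmem w).1 hw
        exact F2 u hu'.1 w hw'.1 hu'.2 (by omega))
      have : QLC.dg G Aᶜ u = y u := rfl
      omega
    have h2 : ∀ u ∈ Aᶜ \ T, 2 * x u + y u ≤ k := by
      intro u hu
      rw [Finset.mem_sdiff] at hu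
      have hy1 := hyk u hu.1
      have huA := Finset.mem_compl.1 hu.1
      have h3 : ¬ 2 ≤ x u := fun h => hu.2 ((hTmem u).2 ⟨huA, h⟩)
      by_cases h4 : x u = 0
      · omega
      · have h6 := QLC.dg_avoid G Aᶜ (insert u T) u (by
          intro z hz
          rw [Finset.mem_insert] at hz
          rcases hz with rfl | hz
          · exact hu.1
          · exact hTS hz) (by
          intro z hz
          rw [Finset.mem_insert] at hz
          rcases hz with rfl | hz
          · simp
          · have hz' := (hTmem z).1 hz
            exact fun h => F2 z hz'.1 u huA hz'.2 (by omega) h.symm)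
        rw [Finset.card_insert_of_notMem hu.2, hs] at h6
        have : QLC.dg G Aᶜ u = y u := rfl
        omega
    have h3 := Finset.sum_le_card_nsmul _ _ _ h1
    have h4 := Finset.sum_le_card_nsmul _ _ _ h2
    rw [Finset.card_sdiff_of_subset hTS, hs, smul_eq_mul] at h4
    rw [smul_eq_mul] at h3
    rw [hs] at htS
    set t := #T
    obtain ⟨r, hr⟩ : ∃ r, k + 1 = t + r := ⟨k + 1 - t, by omega⟩
    have e1 : k + 5 - t = r + 4 := by omega
    have e2 : k + 1 - t = r := by omega
    rw [e1] at h3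
    rw [e2] at h4
    obtain ⟨t', ht'⟩ : ∃ t', t = t' + 2 := ⟨t - 2, by omega⟩
    have hk' : k = t' + 1 + r := by omega
    refine (add_le_add h4 h3).trans ?_
    rw [hk', ht']
    rcases Nat.eq_zero_or_pos t' with h0 | h0
    · subst h0; nlinarith
    · nlinarith

theorem QLC.struct {n k : ℕ} (hk : 1 ≤ k) (hn1 : 6 * k + 11 ≤ n) (hn2 : k ^ 2 + 2 * k + 3 ≤ n)
    {G : SimpleGraph (Fin n)} (htot : QLC.tot G < 2 * k * (n - 1))
    (hmax : Maximal (fun H : SimpleGraph (Fin n) =>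
      ∀ m q, n - k + 1 ≤ m → ¬ QLC.IsC H m q) G) :
    ∃ K : Finset (Fin n), #K = n - k ∧ ∀ u ∉ K, QLC.dg G K u ≤ 1 := by
  have hno := hmax.prop
  have hore := QLC.maximal_deg (show 3 ≤ n - k + 1 by omega) hmax
  obtain ⟨A, hA0, hA, hAm⟩ := QLC.max_clique G (Finset.univ.filter (fun v => n ≤ 2 * G.degree v)) (by
    intro u hu v hv huv
    simp only [Finset.coe_filter, Finset.mem_univ, true_and, Set.mem_ofPred_eq] at hu hv
    by_contra hna
    have := hore u v huv hna
    omega)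
  have hcard : #A + #Aᶜ = n := by
    rw [Finset.card_add_card_compl, Fintype.card_fin]
  set s := #Aᶜ with hs
  -- s < 4k
  have hs4 : s < 4 * k := by
    have h1 : ∑ u ∈ Aᶜ, 2 * QLC.cod G u ≤ 2 * QLC.tot G := by
      rw [← Finset.mul_sum]
      refine Nat.mul_le_mul_left 2 ?_
      exact Finset.sum_le_univ_sum_of_nonneg (fun _ => Nat.zero_le _)
    have h2 : ∀ u ∈ Aᶜ, n - 1 ≤ 2 * QLC.cod G u := by
      intro u hu
      have h3 : ¬ n ≤ 2 * G.degree u := by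
        intro h
        exact (Finset.mem_compl.1 hu) (hA0 (by simp [h]))
      have := QLC.cod_add_degree G u
      omega
    have h3 := Finset.card_nsmul_le_sum _ _ _ h2
    rw [smul_eq_mul, ← hs] at h3
    by_contra hcon
    push Not at hcon
    have h4 : 4 * k * (n - 1) ≤ s * (n - 1) := Nat.mul_le_mul_right _ hcon
    have h5 : 4 * k * (n - 1) = 2 * (2 * k * (n - 1)) := by ring
    omega
  have hdeg : ∀ u ∉ A, G.degree u ≤ s := by
    intro u hu
    obtain ⟨v, hv, hna⟩ := hAm u hu
    have h1 := hore u v (fun h => hu (h ▸ hv)) hna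
    have h2 : A.erase v ⊆ G.neighborFinset v := by
      intro w hw
      rw [Finset.mem_erase] at hw
      rw [SimpleGraph.mem_neighborFinset]
      exact hA hv hw.2 hw.1.symm
    have h3 := Finset.card_le_card h2
    rw [Finset.card_erase_of_mem hv, SimpleGraph.card_neighborFinset_eq_degree] at h3
    have : 0 < #A := Finset.card_pos.2 ⟨v, hv⟩
    omega
  have hn3 : 8 * k + 1 ≤ n := by
    rcases le_or_gt k 5 with h | h
    · omega
    · nlinarith
  -- s ≥ k
  have hsk : k ≤ s := by
    obtain ⟨a, ha, b, hb, hab⟩ := Finset.one_lt_card.1 (show 1 < #A by omega)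
    obtain ⟨m, p, hm, hp⟩ := QLC.absorb hA a b ha hb [] (by simpa using hab)
      (by simpa using hA ha hb hab) ∅ (by simp) (by simp)
    rw [Finset.card_empty] at hm
    by_contra hcon
    exact hno m p (by omega) hp
  rcases Nat.lt_trichotomy s (k + 1) with h | h | h
  · have hsk' : s = k := by omega
    refine ⟨A, by omega, fun u hu => ?_⟩
    by_contra hcon
    obtain ⟨a, b, hab, ha, hb, hua, hub⟩ := QLC.two_nbrs (show 2 ≤ QLC.dg G A u by omega)
    obtain ⟨m, p, hm, hp⟩ := QLC.absorb hA a b ha hb [u]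
      (by
        have : a ≠ u := hua.ne'
        have : u ≠ b := hub.ne
        simp; tauto)
      (by simp [hua.symm, hub]) {u} (by simp) (by simpa using hu)
    rw [Finset.card_singleton] at hm
    exact hno m p (by omega) hp
  · exfalso
    have h1 := QLC.sum_bound hk hA (hs.symm.trans h) (fun u hu => (hdeg u hu).trans h.le)
      (fun m q hm => hno m q (by omega))
    have h2 := QLC.count G A
    rw [← hs, h] at h2
    have h3 : #A = n - (k + 1) := by omega
    rw [h3] at h2
    obtain ⟨r, rfl⟩ : ∃ r, n = k ^ 2 + 2 * k + 3 + r := ⟨n - (k ^ 2 + 2 * k + 3), by omega⟩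
    have e1 : k ^ 2 + 2 * k + 3 + r - 1 = k ^ 2 + 2 * k + 2 + r := by omega
    have e2 : k ^ 2 + 2 * k + 3 + r - (k + 1) = k ^ 2 + k + 2 + r := by omega
    rw [e1] at h2 htot
    rw [e2] at h2
    nlinarith
  · exfalso
    have h2 := QLC.count G A
    have h1 : ∀ u ∈ Aᶜ, 2 * QLC.dg G A u + QLC.dg G Aᶜ u ≤ 2 * s := by
      intro u hu
      have := QLC.dg_add G A u
      have := hdeg u (Finset.mem_compl.1 hu)
      omega
    have h3 := Finset.sum_le_card_nsmul _ _ _ h1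
    rw [smul_eq_mul, ← hs] at h3
    rw [← hs] at h2
    have h4 := QLC.arith k n s (by exact_mod_cast hk) (by exact_mod_cast hn1)
      (by exact_mod_cast hn2) (by exact_mod_cast h) (by exact_mod_cast hs4.le)
    have hA' : (#A : ℤ) = n - s := by omega
    have h5 : (s : ℤ) * (n - 1) + s * #A < 2 * k * (n - 1) + s * (2 * s) := by
      have hh : s * (n - 1) + s * #A < 2 * k * (n - 1) + s * (2 * s) := by omega
      have hcast : ((n - 1 : ℕ) : ℤ) = n - 1 := by omega
      rw [← hcast]
      exact_mod_cast hh
    rw [hA'] at h5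
    nlinarith

end QLCstruct

section QLCfy
open Classical Finset

/-- the combinatorial part of the Feng–Yu bound -/
theorem QLC.fy_comb {n : ℕ} (G : SimpleGraph (Fin n)) (v : Fin n) (hd : 0 < G.degree v) :
    G.degree v * QLC.tot G ≤
      (n - 1) * (∑ u ∈ G.neighborFinset v, QLC.cod G u + G.degree v * QLC.cod G v) := by
  set N := G.neighborFinset v with hN
  set R := Finset.univ.filter (fun u => u ≠ v ∧ ¬ G.Adj v u) with hR
  have hr : #R = QLC.cod G v := rfl
  have hdN : #N = G.degree v := rfl
  have hcd := QLC.cod_add_degree G v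
  have hsplit : QLC.tot G = QLC.cod G v + (∑ u ∈ N, QLC.cod G u + ∑ u ∈ R, QLC.cod G u) := by
    unfold QLC.tot
    rw [← Finset.add_sum_erase _ _ (Finset.mem_univ v)]
    congr 1
    rw [← Finset.sum_union]
    · refine Finset.sum_congr ?_ fun _ _ => rfl
      ext u
      simp only [hN, hR, Finset.mem_erase, Finset.mem_univ, and_true, Finset.mem_union,
        SimpleGraph.mem_neighborFinset, Finset.mem_filter, true_and]
      have : G.Adj v u → u ≠ v := fun h => h.ne'
      tauto
    · rw [Finset.disjoint_left]
      intro u hu hu'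
      rw [hN, SimpleGraph.mem_neighborFinset] at hu
      exact (Finset.mem_filter.1 hu').2.2 hu
  set Y := ∑ u ∈ R, #(N.filter (fun w => ¬ G.Adj u w)) with hY
  have hY2 : Y = ∑ w ∈ N, #(R.filter (fun u => ¬ G.Adj u w)) :=
    Finset.sum_card_bipartiteAbove_eq_sum_card_bipartiteBelow (fun u w => ¬ G.Adj u w)
  have h1 : ∑ u ∈ R, QLC.cod G u ≤ #R * #R + Y := by
    have : ∀ u ∈ R, QLC.cod G u ≤ #R + #(N.filter (fun w => ¬ G.Adj u w)) := by
      intro u hu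
      have hsub : Finset.univ.filter (fun w => w ≠ u ∧ ¬ G.Adj u w) ⊆
          (insert v (R.erase u)) ∪ N.filter (fun w => ¬ G.Adj u w) := by
        intro w hw
        simp only [hN, hR, Finset.mem_filter, Finset.mem_univ, true_and, Finset.mem_union,
          Finset.mem_insert, Finset.mem_erase, SimpleGraph.mem_neighborFinset] at hw ⊢
        tauto
      have hc := Finset.card_le_card hsub
      have hc2 := Finset.card_union_le (insert v (R.erase u)) (N.filter (fun w => ¬ G.Adj u w))
      have hc3 := Finset.card_insert_le v (R.erase u)
      rw [Finset.card_erase_of_mem hu] at hc3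
      have : 0 < #R := Finset.card_pos.2 ⟨u, hu⟩
      have : QLC.cod G u = #(Finset.univ.filter (fun w => w ≠ u ∧ ¬ G.Adj u w)) := rfl
      omega
    refine (Finset.sum_le_sum this).trans ?_
    rw [Finset.sum_add_distrib, Finset.sum_const, smul_eq_mul]
  have h2 : Y ≤ ∑ u ∈ N, QLC.cod G u := by
    rw [hY2]
    refine Finset.sum_le_sum fun w hw => Finset.card_le_card fun u hu => ?_
    rw [hN, SimpleGraph.mem_neighborFinset] at hw
    simp only [hR, Finset.mem_filter, Finset.mem_univ, true_and] at hu ⊢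
    refine ⟨fun h => ?_, fun h => hu.2 h.symm⟩
    subst h
    exact hu.1.2 hw
  have h3 : Y ≤ #R * #N := by
    have : ∀ u ∈ R, #(N.filter (fun w => ¬ G.Adj u w)) ≤ #N := fun u _ =>
      Finset.card_le_card (Finset.filter_subset _ _)
    have := Finset.sum_le_card_nsmul _ _ _ this
    rwa [smul_eq_mul] at this
  have hn : n - 1 = G.degree v + QLC.cod G v := by omega
  rw [hn, hsplit]
  rw [hr] at h1 h3
  rw [hdN] at h3
  set d := G.degree v
  set r := QLC.cod G v
  set S := ∑ u ∈ N, QLC.cod G u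
  set T := ∑ u ∈ R, QLC.cod G u
  have main : d * r + d * Y ≤ r * Y + d * d * r := by
    rcases le_total d r with h | h
    · have a1 : d * Y ≤ r * Y := Nat.mul_le_mul_right _ h
      have a2 : d * r ≤ d * d * r := Nat.mul_le_mul_right _ (Nat.le_mul_of_pos_left d hd)
      omega
    · obtain ⟨e, he⟩ := Nat.exists_eq_add_of_le h
      rw [he] at h3 ⊢
      have a1 : e * Y ≤ e * (r * (r + e)) := Nat.mul_le_mul_left e h3
      have a2 : r ≤ r * r := Nat.le_mul_self r
      have a3 : (r + e) * r ≤ (r + e) * (r * r) := Nat.mul_le_mul_left _ a2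
      nlinarith
  have m1 : d * T ≤ d * (r * r + Y) := Nat.mul_le_mul_left d h1
  have m2 : r * Y ≤ r * S := Nat.mul_le_mul_left r h2
  nlinarith

theorem QLC.fy {n : ℕ} (hn : 0 < n) (G : SimpleGraph (Fin n)) (hq : 0 < qSpecRad G) :
    qSpecRad G * ((n : ℝ) - 1) ≤ 2 * ((n : ℝ) - 1) ^ 2 - QLC.tot G := by
  obtain ⟨x, hx0, hx⟩ := QLC.exists_eigen hn G
  set q := qSpecRad G with hqdef
  have hsum : ∀ u, ∀ f : Fin n → ℝ, (∑ v, if G.Adj u v then f v else 0) =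
      ∑ v ∈ G.neighborFinset u, f v := by
    intro u f
    rw [← Finset.sum_filter]
    refine Finset.sum_congr ?_ fun _ _ => rfl
    ext v; simp
  have hx' : ∀ u, ∑ v ∈ G.neighborFinset u, (x u + x v) = q * x u := by
    intro u
    rw [← hsum u (fun v => x u + x v)]
    exact hx u
  have hiso : ∀ u, G.degree u = 0 → x u = 0 := by
    intro u hu
    have h1 := hx' u
    rw [← SimpleGraph.card_neighborFinset_eq_degree, Finset.card_eq_zero] at hu
    rw [hu, Finset.sum_empty] at h1
    rcases mul_eq_zero.1 h1.symm with h | h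
    · exact absurd h hq.ne'
    · exact h
  have : Nonempty (Fin n) := ⟨⟨0, hn⟩⟩
  obtain ⟨v, hv⟩ := Finite.exists_max (fun u => |x u| / (G.degree u : ℝ))
  set M := |x v| / (G.degree v : ℝ) with hM
  obtain ⟨u0, hu0⟩ := Function.ne_iff.1 hx0
  have hdu0 : 0 < G.degree u0 := Nat.pos_of_ne_zero fun h => hu0 (hiso u0 h)
  have hMpos : 0 < M := by
    refine lt_of_lt_of_le ?_ (hv u0)
    have : (0 : ℝ) < G.degree u0 := by exact_mod_cast hdu0
    have : 0 < |x u0| := abs_pos.2 hu0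
    positivity
  have hdv : 0 < G.degree v := by
    refine Nat.pos_of_ne_zero fun h => ?_
    rw [hM, h] at hMpos
    simp at hMpos
  have hdvR : (0 : ℝ) < G.degree v := by exact_mod_cast hdv
  have hxu : ∀ u, |x u| ≤ M * G.degree u := by
    intro u
    rcases Nat.eq_zero_or_pos (G.degree u) with h | h
    · rw [h, hiso u h]; simp
    · have : (0 : ℝ) < G.degree u := by exact_mod_cast h
      exact (div_le_iff₀ this).1 (hv u)
  have hxv : |x v| = M * G.degree v := by
    rw [hM]; field_simp
  have h1 : q * G.degree v ≤ ∑ u ∈ G.neighborFinset v, ((G.degree v : ℝ) + G.degree u) := by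
    have h2 : q * |x v| ≤ ∑ u ∈ G.neighborFinset v, (M * G.degree v + M * G.degree u) := by
      have : q * |x v| = |q * x v| := by rw [abs_mul, abs_of_pos hq]
      rw [this, ← hx' v]
      refine (Finset.abs_sum_le_sum_abs _ _).trans (Finset.sum_le_sum fun u _ => ?_)
      exact (abs_add_le _ _).trans (add_le_add (hxu v) (hxu u))
    rw [hxv] at h2
    have h3 : ∑ u ∈ G.neighborFinset v, (M * G.degree v + M * G.degree u) =
        M * ∑ u ∈ G.neighborFinset v, ((G.degree v : ℝ) + G.degree u) := by
      rw [Finset.mul_sum]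
      exact Finset.sum_congr rfl fun _ _ => by ring
    rw [h3] at h2
    exact le_of_mul_le_mul_left (by linarith) hMpos
  have hdeg : ∀ u, (G.degree u : ℝ) = (n - 1) - QLC.cod G u := by
    intro u
    have := QLC.cod_add_degree G u
    have h : ((QLC.cod G u + G.degree u + 1 : ℕ) : ℝ) = n := by exact_mod_cast this
    push_cast at h
    linarith
  have h4 : ∑ u ∈ G.neighborFinset v, ((G.degree v : ℝ) + G.degree u) =
      G.degree v * (G.degree v + (n - 1)) - ∑ u ∈ G.neighborFinset v, (QLC.cod G u : ℝ) := by
    have : ∀ u ∈ G.neighborFinset v, ((G.degree v : ℝ) + G.degree u) =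
      (G.degree v + (n - 1)) - QLC.cod G u := fun u _ => by rw [hdeg u]; ring
    rw [Finset.sum_congr rfl this, Finset.sum_sub_distrib, Finset.sum_const, nsmul_eq_mul,
      SimpleGraph.card_neighborFinset_eq_degree]
  have h5 := QLC.fy_comb G v hdv
  have h6 : (G.degree v : ℝ) * QLC.tot G ≤ (n - 1) *
      (∑ u ∈ G.neighborFinset v, (QLC.cod G u : ℝ) + G.degree v * QLC.cod G v) := by
    have hc : ((n - 1 : ℕ) : ℝ) = n - 1 := by
      rw [Nat.cast_sub hn]; simp
    rw [← hc]
    exact_mod_cast h5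
  rw [h4] at h1
  have hn1 : (0 : ℝ) ≤ n - 1 := by
    have : (1 : ℝ) ≤ n := by exact_mod_cast hn
    linarith
  have h7 := mul_le_mul_of_nonneg_left h1 hn1
  have h8 := hdeg v
  refine le_of_mul_le_mul_left ?_ hdvR
  set d := (G.degree v : ℝ)
  have h9 : (QLC.cod G v : ℝ) = (n - 1) - d := by linarith
  rw [h9] at h6
  nlinarith

theorem QLC.Ladj {n k : ℕ} (u v : Fin n) : (Lgraph n k).Adj u v ↔
    u ≠ v ∧ (u.val = 0 ∨ v.val = 0 ∨ (u.val < n - k ∧ v.val < n - k) ∨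
      (n - k ≤ u.val ∧ n - k ≤ v.val)) := by
  unfold Lgraph
  rw [SimpleGraph.fromRel_adj]
  tauto

theorem QLC.card_lt {n m : ℕ} (h : m ≤ n) :
    #(Finset.univ.filter (fun i : Fin n => i.val < m)) = m := by
  rw [Fin.card_filter_val_lt]
  omega

theorem QLC.qL {n k : ℕ} (hk : 1 ≤ k) (hn : k + 1 ≤ n) :
    2 * ((n : ℝ) - k - 1) < qSpecRad (Lgraph n k) := by
  set z : Fin n → ℝ := fun i => if i.val < n - k then 1 else 0 with hz
  have hcard := QLC.card_lt (show n - k ≤ n by omega)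
  have hc : ((n - k : ℕ) : ℝ) = n - k := by rw [Nat.cast_sub (by omega)]
  have hpos : (0 : ℝ) < n - k := by
    have : ((k + 1 : ℕ) : ℝ) ≤ n := by exact_mod_cast hn
    push_cast at this
    linarith
  have hz2 : ∑ u, z u ^ 2 = (n : ℝ) - k := by
    have : ∀ u, z u ^ 2 = if u.val < n - k then 1 else 0 := by
      intro u; simp only [hz]; split_ifs <;> norm_num
    rw [Finset.sum_congr rfl fun u _ => this u, Finset.sum_boole, hcard, hc]
  have hqf : 4 * ((n : ℝ) - k) * (n - k - 1) ≤ QLC.qf (Lgraph n k) z := by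
    have h1 : ∀ u : Fin n, (if u.val < n - k then 4 * ((n : ℝ) - k - 1) else 0) ≤
        ∑ v, if (Lgraph n k).Adj u v then (z u + z v) ^ 2 else 0 := by
      intro u
      split_ifs with hu
      · have h2 : ∑ v ∈ (Finset.univ.filter (fun i : Fin n => i.val < n - k)).erase u, (4 : ℝ) =
            4 * ((n : ℝ) - k - 1) := by
          rw [Finset.sum_const, Finset.card_erase_of_mem (by simp [hu]), hcard, nsmul_eq_mul,
            Nat.cast_sub (by omega), hc]
          push_cast
          ring
        rw [← h2]
        refine le_trans ?_ (Finset.sum_le_univ_sum_of_nonneg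
          (s := (Finset.univ.filter (fun i : Fin n => i.val < n - k)).erase u) ?_)
        · refine Finset.sum_le_sum fun v hv => ?_
          rw [Finset.mem_erase, Finset.mem_filter] at hv
          rw [if_pos ((QLC.Ladj u v).2 ⟨hv.1.symm, by tauto⟩)]
          simp only [hz]
          rw [if_pos hu, if_pos hv.2.2]
          norm_num
        · intro v
          split_ifs <;> positivity
      · refine Finset.sum_nonneg fun v _ => ?_
        split_ifs <;> positivity
    refine le_trans ?_ (Finset.sum_le_sum fun u _ => h1 u)
    rw [← Finset.sum_filter, Finset.sum_const, hcard, nsmul_eq_mul, hc]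
    linarith
  have h3 := QLC.qf_le (Lgraph n k) z
  rw [hz2] at h3
  by_contra hcon
  push Not at hcon
  have h4 := QLC.eq_of_qf_eq (Lgraph n k) z (by
    rw [hz2]
    nlinarith) ⟨n - 1, by omega⟩
  have hzl : z ⟨n - 1, by omega⟩ = 0 := by
    simp only [hz]
    rw [if_neg (by omega)]
  rw [hzl, mul_zero] at h4
  have h5 := (Finset.sum_eq_zero_iff_of_nonneg (by
    intro v _
    simp only [hz]
    split_ifs <;> norm_num)).1 h4 ⟨0, by omega⟩ (Finset.mem_univ _)
  rw [if_pos ((QLC.Ladj _ _).2 ⟨by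
    intro h
    have := congrArg Fin.val h
    simp at this
    omega, by tauto⟩)] at h5
  simp only [hz] at h5
  rw [if_pos (by omega)] at h5
  norm_num at h5

end QLCfy

section QLCcmp
open Classical Finset

noncomputable def QLC.fr {n : ℕ} (G : SimpleGraph (Fin n)) (z : Fin n → ℝ) (u v : Fin n) : ℝ :=
  if G.Adj u v then (z u + z v) ^ 2 else 0

noncomputable def QLC.sm {n : ℕ} (m : ℕ) (G : SimpleGraph (Fin n)) (z : Fin n → ℝ)
    (u v : Fin n) : ℝ :=
  if (u.val < m ↔ v.val < m) then QLC.fr G z u v else 0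

noncomputable def QLC.cr {n : ℕ} (m : ℕ) (G : SimpleGraph (Fin n)) (z : Fin n → ℝ)
    (u : Fin n) : ℝ :=
  ∑ v, if ¬ u.val < m ∧ v.val < m then QLC.fr G z u v else 0

theorem QLC.fr_nonneg {n : ℕ} (G : SimpleGraph (Fin n)) (z : Fin n → ℝ) (u v : Fin n) :
    0 ≤ QLC.fr G z u v := by
  unfold QLC.fr
  split_ifs <;> positivity

theorem QLC.qf_split {n : ℕ} (m : ℕ) (G : SimpleGraph (Fin n)) (z : Fin n → ℝ) :
    QLC.qf G z = ∑ u, ∑ v, QLC.sm m G z u v + 2 * ∑ u, QLC.cr m G z u := by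
  have h1 : ∑ u, QLC.cr m G z u =
      ∑ u, ∑ v, if u.val < m ∧ ¬ v.val < m then QLC.fr G z u v else 0 := by
    unfold QLC.cr
    rw [Finset.sum_comm]
    refine Finset.sum_congr rfl fun u _ => Finset.sum_congr rfl fun v _ => ?_
    have : QLC.fr G z u v = QLC.fr G z v u := by
      unfold QLC.fr
      simp only [G.adj_comm u v, add_comm (z u) (z v)]
    rw [this]
    simp only [and_comm]
  rw [two_mul]
  nth_rewrite 2 [h1]
  unfold QLC.cr
  rw [← Finset.sum_add_distrib, ← Finset.sum_add_distrib]
  unfold QLC.qf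
  refine Finset.sum_congr rfl fun u _ => ?_
  rw [← Finset.sum_add_distrib, ← Finset.sum_add_distrib]
  refine Finset.sum_congr rfl fun v _ => ?_
  change QLC.fr G z u v = _
  unfold QLC.sm
  by_cases hu : u.val < m <;> by_cases hv : v.val < m <;> simp [hu, hv]

theorem QLC.cmp {n k : ℕ} (hn : k + 1 ≤ n) (G : SimpleGraph (Fin n)) (z : Fin n → ℝ)
    (o : Fin n) (ho : o.val = 0)
    (hz0 : z ≠ 0) (hz : ∀ u, 0 ≤ z u) (hmax : ∀ u : Fin n, u.val < n - k → z u ≤ z o)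
    (huniq : ∀ u a b : Fin n, ¬ u.val < n - k → a.val < n - k → b.val < n - k →
      G.Adj u a → G.Adj u b → a = b)
    (hq : 2 * qSpecRad (Lgraph n k) * ∑ u, z u ^ 2 ≤ QLC.qf G z) : G = Lgraph n k := by
  set L := Lgraph n k with hL
  set m := n - k with hm
  have hom : o.val < m := by omega
  have hLadj : ∀ u v : Fin n, L.Adj u v ↔ u ≠ v ∧ (u.val = 0 ∨ v.val = 0 ∨
      (u.val < m ∧ v.val < m) ∨ (m ≤ u.val ∧ m ≤ v.val)) := fun u v => QLC.Ladj u v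
  have hcrL : ∀ u : Fin n, ¬ u.val < m → QLC.cr m L z u = (z u + z o) ^ 2 := by
    intro u hu
    unfold QLC.cr
    rw [Finset.sum_eq_single o]
    · rw [if_pos ⟨hu, hom⟩]
      unfold QLC.fr
      rw [if_pos ((hLadj u o).2 ⟨fun h => hu (h ▸ hom), by tauto⟩)]
    · intro v _ hv
      by_cases hvm : v.val < m
      · rw [if_pos ⟨hu, hvm⟩]
        unfold QLC.fr
        rw [if_neg]
        rw [hLadj]
        have : v.val ≠ 0 := fun h => hv (Fin.ext (h.trans ho.symm))
        omega
      · rw [if_neg (fun h => hvm h.2)]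
    · simp
  have hcrG : ∀ u a : Fin n, ¬ u.val < m → a.val < m → G.Adj u a →
      QLC.cr m G z u = (z u + z a) ^ 2 := by
    intro u a hu ha hua
    unfold QLC.cr
    rw [Finset.sum_eq_single a]
    · rw [if_pos ⟨hu, ha⟩]
      unfold QLC.fr
      rw [if_pos hua]
    · intro v _ hv
      by_cases hvm : v.val < m
      · rw [if_pos ⟨hu, hvm⟩]
        unfold QLC.fr
        rw [if_neg]
        intro h
        exact hv (huniq u v a hu hvm ha h hua)
      · rw [if_neg (fun h => hvm h.2)]
    · simp
  have hcrG0 : ∀ u : Fin n, (∀ a : Fin n, a.val < m → ¬ G.Adj u a) → QLC.cr m G z u = 0 := by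
    intro u h
    unfold QLC.cr
    refine Finset.sum_eq_zero fun v _ => ?_
    by_cases hvm : v.val < m
    · unfold QLC.fr
      rw [if_neg (h v hvm)]
      simp
    · rw [if_neg (fun h => hvm h.2)]
  have hcrK : ∀ (H : SimpleGraph (Fin n)) (u : Fin n), u.val < m → QLC.cr m H z u = 0 := by
    intro H u hu
    unfold QLC.cr
    refine Finset.sum_eq_zero fun v _ => ?_
    rw [if_neg (fun h => h.1 hu)]
  have hcr : ∀ u, QLC.cr m G z u ≤ QLC.cr m L z u := by
    intro u
    by_cases hu : u.val < m
    · rw [hcrK _ _ hu, hcrK _ _ hu]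
    · rw [hcrL u hu]
      by_cases h : ∃ a : Fin n, a.val < m ∧ G.Adj u a
      · obtain ⟨a, ha, hua⟩ := h
        rw [hcrG u a hu ha hua]
        have := hmax a ha
        have := hz u
        have := hz a
        gcongr
      · push Not at h
        rw [hcrG0 u h]
        positivity
  have hsm : ∀ u v, QLC.sm m G z u v ≤ QLC.sm m L z u v := by
    intro u v
    unfold QLC.sm
    split_ifs with h
    · by_cases huv : G.Adj u v
      · unfold QLC.fr
        rw [if_pos huv, if_pos ((hLadj u v).2 ⟨huv.ne, by omega⟩)]
      · have : QLC.fr G z u v = 0 := by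
          unfold QLC.fr
          rw [if_neg huv]
        rw [this]
        exact QLC.fr_nonneg _ _ _ _
    · exact le_refl _
  have hS : ∑ u, ∑ v, QLC.sm m G z u v ≤ ∑ u, ∑ v, QLC.sm m L z u v :=
    Finset.sum_le_sum fun u _ => Finset.sum_le_sum fun v _ => hsm u v
  have hC : ∑ u, QLC.cr m G z u ≤ ∑ u, QLC.cr m L z u := Finset.sum_le_sum fun u _ => hcr u
  have hle := QLC.qf_le L z
  have hsL := QLC.qf_split m L z
  have hsG := QLC.qf_split m G z
  have hSeq : ∑ u, ∑ v, QLC.sm m G z u v = ∑ u, ∑ v, QLC.sm m L z u v := by linarith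
  have hCeq : ∑ u, QLC.cr m G z u = ∑ u, QLC.cr m L z u := by linarith
  have hcr' : ∀ u, QLC.cr m G z u = QLC.cr m L z u := fun u =>
    (Finset.sum_eq_sum_iff_of_le fun u _ => hcr u).1 hCeq u (Finset.mem_univ _)
  have hsm' : ∀ u v, QLC.sm m G z u v = QLC.sm m L z u v := fun u v =>
    (Finset.sum_eq_sum_iff_of_le fun v _ => hsm u v).1
      ((Finset.sum_eq_sum_iff_of_le fun u _ => Finset.sum_le_sum fun v _ => hsm u v).1 hSeq u
        (Finset.mem_univ _)) v (Finset.mem_univ _)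
  have heig := QLC.eq_of_qf_eq L z (by linarith)
  have hterm : ∀ u v : Fin n, 0 ≤ if L.Adj u v then z u + z v else 0 := by
    intro u v
    split_ifs
    · exact add_nonneg (hz u) (hz v)
    · exact le_refl _
  have hzero : ∀ u v, z u = 0 → L.Adj u v → z v = 0 := by
    intro u v hu huv
    have h1 := heig u
    have h0 : qSpecRad L * z u = 0 := by rw [hu, mul_zero]
    have h2 := (Finset.sum_eq_zero_iff_of_nonneg fun v _ => hterm u v).1 (h1.trans h0) v
      (Finset.mem_univ _)
    rw [if_pos huv, hu, zero_add] at h2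
    exact h2
  have hLo : ∀ u, u ≠ o → L.Adj u o := fun u hu => (hLadj u o).2 ⟨hu, by tauto⟩
  have hzo : z o ≠ 0 := by
    intro h
    apply hz0
    funext v
    by_cases hv : v = o
    · rw [hv, h]; rfl
    · exact hzero o v h (hLo v hv).symm
  have hzp : ∀ u, 0 < z u := by
    intro u
    refine lt_of_le_of_ne (hz u) fun h => ?_
    by_cases hu : u = o
    · exact hzo (hu ▸ h.symm)
    · exact hzo (hzero u o h.symm (hLo u hu))
  have hsame : ∀ u v : Fin n, u ≠ v → (u.val < m ↔ v.val < m) → G.Adj u v := by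
    intro u v huv h
    have h1 := hsm' u v
    unfold QLC.sm at h1
    rw [if_pos h, if_pos h] at h1
    unfold QLC.fr at h1
    rw [if_pos ((hLadj u v).2 ⟨huv, by omega⟩)] at h1
    by_contra hna
    rw [if_neg hna] at h1
    have := hzp u
    have := hzp v
    have : 0 < (z u + z v) ^ 2 := by positivity
    linarith
  have hout : ∀ u : Fin n, ¬ u.val < m → G.Adj u o := by
    intro u hu
    have h1 := hcr' u
    rw [hcrL u hu] at h1
    have hu0 := hzp u
    have ho0 := hzp o
    by_cases h : ∃ a : Fin n, a.val < m ∧ G.Adj u a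
    · obtain ⟨a, ha, hua⟩ := h
      have ha0 := hzp a
      rw [hcrG u a hu ha hua] at h1
      have h2 : z a = z o := by
        have := (pow_left_inj₀ (by positivity) (by positivity) (two_ne_zero)).1 h1
        linarith
      by_cases hao : a = o
      · exact hao ▸ hua
      · exfalso
        have haux : ∀ x : Fin n, (∑ v, if L.Adj x v ∨ x = v then z x + z v else 0) =
            qSpecRad L * z x + 2 * z x := by
          intro x
          have h3 : (2 * z x) = ∑ v, if x = v then 2 * z x else 0 := by simp
          rw [← heig x]
          rw [h3, ← Finset.sum_add_distrib]
          refine Finset.sum_congr rfl fun v _ => ?_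
          by_cases hxv : x = v
          · subst hxv
            simp
            ring
          · simp [hxv]
        have h4 := haux a
        rw [h2, ← haux o] at h4
        refine absurd h4 (ne_of_lt ?_)
        refine Finset.sum_lt_sum (fun v _ => ?_) ⟨u, Finset.mem_univ _, ?_⟩
        · have hr : L.Adj o v ∨ o = v := by
            by_cases hov : o = v
            · exact Or.inr hov
            · exact Or.inl (hLo v (Ne.symm hov)).symm
          rw [if_pos hr]
          split_ifs
          · exact le_refl _
          · exact add_nonneg (hz o) (hz v)
        · rw [if_neg, if_pos]
          · positivity
          · exact Or.inl (hLo u (fun h => hu (h ▸ hom))).symm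
          · rw [hLadj]
            have : a.val ≠ 0 := fun h => hao (Fin.ext (h.trans ho.symm))
            have : a ≠ u := fun h => hu (h ▸ ha)
            omega
    · push Not at h
      rw [hcrG0 u h] at h1
      have : 0 < (z u + z o) ^ 2 := by positivity
      linarith
  ext u v
  have hcross : ∀ u v : Fin n, ¬ u.val < m → v.val < m → (G.Adj u v ↔ L.Adj u v) := by
    intro u v hu hv
    have hne : u ≠ v := fun h => hu (h ▸ hv)
    constructor
    · intro h
      have := huniq u v o hu hv hom h (hout u hu)
      rw [this]
      exact hLo u (this ▸ hne)
    · intro h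
      rw [hLadj] at h
      have : v.val = 0 := by omega
      have : v = o := Fin.ext (this.trans ho.symm)
      rw [this]
      exact hout u hu
  by_cases huv : u = v
  · subst huv; simp
  by_cases hu : u.val < m <;> by_cases hv : v.val < m
  · exact iff_of_true (hsame u v huv (by tauto)) ((hLadj u v).2 ⟨huv, by tauto⟩)
  · rw [G.adj_comm, L.adj_comm]
    exact hcross v u hv hu
  · exact hcross u v hu hv
  · exact iff_of_true (hsame u v huv (by tauto)) ((hLadj u v).2 ⟨huv, by omega⟩)

theorem QLC.exists_perm {n k : ℕ} (hn : k + 1 ≤ n) (K : Finset (Fin n)) (hK : #K = n - k)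
    (w : Fin n) (hw : w ∈ K) (o : Fin n) (ho : o.val = 0) :
    ∃ e : Fin n ≃ Fin n, e o = w ∧ ∀ i, e i ∈ K ↔ i.val < n - k := by
  have hc : #(Finset.univ.filter (fun i : Fin n => i.val < n - k)) = #K := by
    rw [QLC.card_lt (by omega), hK]
  have hc' : Fintype.card {i : Fin n // i.val < n - k} = Fintype.card {i : Fin n // i ∈ K} := by
    rw [Fintype.card_subtype, hc]
    simp
  set e1 := (Fintype.equivOfCardEq hc').extendSubtype with he1
  have h1 : ∀ i : Fin n, e1 i ∈ K ↔ i.val < n - k := by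
    intro i
    by_cases hi : i.val < n - k
    · exact iff_of_true (Equiv.extendSubtype_mem _ i hi) hi
    · exact iff_of_false (Equiv.extendSubtype_not_mem _ i hi) hi
  set j := e1.symm w with hj
  have hjm : j.val < n - k := by
    rw [← h1, hj, Equiv.apply_symm_apply]
    exact hw
  refine ⟨(Equiv.swap o j).trans e1, ?_, fun i => ?_⟩
  · simp [hj]
  · rw [Equiv.trans_apply, h1]
    by_cases h2 : i = o
    · subst h2
      rw [Equiv.swap_apply_left]
      omega
    · by_cases h3 : i = j
      · rw [h3, Equiv.swap_apply_right]
        omega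
      · rw [Equiv.swap_apply_of_ne_of_ne h2 h3]

theorem QLC.final {n k : ℕ} (hn : k + 1 ≤ n) (G : SimpleGraph (Fin n))
    (K : Finset (Fin n)) (hK : #K = n - k) (hdg : ∀ u ∉ K, QLC.dg G K u ≤ 1)
    (hq : qSpecRad (Lgraph n k) ≤ qSpecRad G) : Nonempty (G ≃g Lgraph n k) := by
  obtain ⟨y, hy0, hy, hyq⟩ := QLC.exists_nonneg (show 0 < n by omega) G
  obtain ⟨w, hw, hwmax⟩ := Finset.exists_max_image K y (Finset.card_pos.1 (by omega))
  set o : Fin n := ⟨0, by omega⟩ with ho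
  obtain ⟨e, heo, he⟩ := QLC.exists_perm hn K hK w hw o rfl
  have hmain : G.comap e = Lgraph n k := by
    refine QLC.cmp hn (G.comap e) (y ∘ e) o rfl ?_ (fun u => hy _) ?_ ?_ ?_
    · intro h
      apply hy0
      funext v
      have := congrFun h (e.symm v)
      simpa using this
    · intro u hu
      have := hwmax (e u) ((he u).2 hu)
      simpa [heo] using this
    · intro u a b hu ha hb hua hub
      rw [SimpleGraph.comap_adj] at hua hub
      have h1 := hdg (e u) (fun h => hu ((he u).1 h))
      have h2 := Finset.card_le_one.1 (show #(K.filter (G.Adj (e u) ·)) ≤ 1 from h1)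
        (e a) (Finset.mem_filter.2 ⟨(he a).2 ha, hua⟩)
        (e b) (Finset.mem_filter.2 ⟨(he b).2 hb, hub⟩)
      exact e.injective h2
    · have h1 : QLC.qf (G.comap e) (y ∘ e) = QLC.qf G y := by
        unfold QLC.qf
        symm
        rw [← Equiv.sum_comp e]
        refine Finset.sum_congr rfl fun u _ => ?_
        rw [← Equiv.sum_comp e]
        refine Finset.sum_congr rfl fun v _ => ?_
        simp only [SimpleGraph.comap_adj, Function.comp]
      have h2 : ∑ u, (y ∘ e) u ^ 2 = ∑ u, y u ^ 2 := Equiv.sum_comp e (fun u => y u ^ 2)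
      rw [h1, h2]
      have h3 : 0 ≤ ∑ u, y u ^ 2 := Finset.sum_nonneg fun _ _ => sq_nonneg _
      nlinarith [mul_le_mul_of_nonneg_right hq h3]
  rw [← hmain]
  exact ⟨(SimpleGraph.Iso.comap e G).symm⟩

theorem QLC.tot_mono {n : ℕ} {G H : SimpleGraph (Fin n)} (h : G ≤ H) :
    QLC.tot H ≤ QLC.tot G := by
  refine Finset.sum_le_sum fun v _ => Finset.card_le_card fun u hu => ?_
  simp only [Finset.mem_filter, Finset.mem_univ, true_and] at hu ⊢
  exact ⟨hu.1, fun h' => hu.2 (h h')⟩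

theorem QLC.dg_mono {n : ℕ} {G H : SimpleGraph (Fin n)} (h : G ≤ H) (K : Finset (Fin n))
    (u : Fin n) : QLC.dg G K u ≤ QLC.dg H K u := by
  refine Finset.card_le_card fun v hv => ?_
  rw [Finset.mem_filter] at hv ⊢
  exact ⟨hv.1, h hv.2⟩

theorem QLC.tot_lt {n k : ℕ} (hk : 1 ≤ k) (hn : k + 2 ≤ n) (G : SimpleGraph (Fin n))
    (hq : qSpecRad (Lgraph n k) ≤ qSpecRad G) : QLC.tot G < 2 * k * (n - 1) := by
  have h1 := QLC.qL hk (show k + 1 ≤ n by omega)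
  have hnR : (k : ℝ) + 2 ≤ n := by exact_mod_cast hn
  have hkR : (1 : ℝ) ≤ k := by exact_mod_cast hk
  have h2 := QLC.fy (show 0 < n by omega) G (by linarith)
  have h3 : (QLC.tot G : ℝ) < 2 * k * (n - 1) := by
    have : 2 * ((n : ℝ) - k - 1) * (n - 1) < qSpecRad G * (n - 1) :=
      mul_lt_mul_of_pos_right (by linarith) (by linarith)
    nlinarith
  have hc : ((n - 1 : ℕ) : ℝ) = n - 1 := by
    rw [Nat.cast_sub (by omega)]; simp
  rw [← hc] at h3
  exact_mod_cast h3

end QLCcmp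

/-- Theorem 1.6 (b): signless Laplacian spectral radius condition for cycles of
consecutive lengths. -/
theorem q_spectral_large_cycles (k n : ℕ) (G : SimpleGraph (Fin n)) (hk : 1 ≤ k)
    (hn1 : 6 * k + 11 ≤ n) (hn2 : k ^ 2 + 2 * k + 3 ≤ n)
    (hq : qSpecRad (Lgraph n k) ≤ qSpecRad G) :
    (∀ l : ℕ, 3 ≤ l → l ≤ n - k + 1 → HasCycleLen G l) ∨
      Nonempty (G ≃g Lgraph n k) := by
  have htot := QLC.tot_lt hk (by omega) G hq
  by_cases hcyc : ∃ m q, n - k + 1 ≤ m ∧ QLC.IsC G m q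
  · left
    obtain ⟨m, p, hm, hp⟩ := hcyc
    intro l hl hlm
    refine QLC.pan hp (by omega) ?_ l hl (by omega)
    have h1 : (n - k + 1) * (n - k + 1 - 2) ≤ m * (m - 2) :=
      Nat.mul_le_mul hm (by omega)
    refine lt_of_lt_of_le ?_ h1
    obtain ⟨r, rfl⟩ : ∃ r, n = 6 * k + 11 + r := ⟨n - (6 * k + 11), by omega⟩
    have e1 : 6 * k + 11 + r - k + 1 = 5 * k + 12 + r := by omega
    have e2 : 5 * k + 12 + r - 2 = 5 * k + 10 + r := by omega
    have e3 : 6 * k + 11 + r - 1 = 6 * k + 10 + r := by omega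
    rw [e1, e2]
    rw [e3] at htot
    nlinarith
  · right
    push Not at hcyc
    obtain ⟨H, hGH, hmax⟩ := Finite.exists_le_maximal
      (p := fun H : SimpleGraph (Fin n) => ∀ m q, n - k + 1 ≤ m → ¬ QLC.IsC H m q) hcyc
    obtain ⟨K, hK, hdg⟩ := QLC.struct hk hn1 hn2 ((QLC.tot_mono hGH).trans_lt htot) hmax
    exact QLC.final (by omega) G K hK (fun u hu => (QLC.dg_mono hGH K u).trans (hdg u hu)) hq
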